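/- arXiv:2511.01782 — 4 statements merged into one kernel-verified Lean document; each statement's English description precedes it below -/
import Mathlib

section
/- Let p ≥ 7 be a prime and let C be a cyclic group of order 3p. Then there is no generalized character χ of C whose values on all nonidentity elements of C are sums of at most two roots of unity and which can be written either as χ = a·ρ_C + ε·(λ₁ + λ₂ + λ₃) or as χ = a·ρ_C + ε·(λ₁ + λ₂ + λ₃ + λ₄), for some integer a, sign ε ∈ {1, −1}, and pairwise distinct irreducible characters λᵢ of C (i.e., C admits no such character of type (3,0), (0,3), (4,0), or (0,4)). -/
/-!
At an element of order `p` the regular character vanishes and, up to sign, `χ` is a sum of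
`k ∈ {3, 4}` complex `p`-th roots of unity. Suppose that it is also a sum `∑ uⱼ` of `m ≤ 2` roots of
unity. Taking `p`-th powers in a ring of algebraic integers gives `∑ uⱼ ^ p ≡ k` modulo `p`. All
conjugates of `∑ uⱼ ^ p - k` have absolute value at most `k + m < p`, while a nonzero algebraic
integer has a conjugate of absolute value at least `1`; hence the difference, being a multiple of
`p`, is zero. Now `∑ uⱼ ^ p = k`, and the triangle inequality forces `k ≤ m`.
-/

def IsRootOfUnity (z : ℂ) : Prop := ∃ n : ℕ, 0 < n ∧ z ^ n = 1

def IsSumAtMostTwoRootsOfUnity (z : ℂ) : Prop :=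
  z = 0 ∨ IsRootOfUnity z ∨ ∃ u v : ℂ, IsRootOfUnity u ∧ IsRootOfUnity v ∧ z = u + v

lemma isRootOfUnity_iff_isOfFinOrder {z : ℂ} : IsRootOfUnity z ↔ IsOfFinOrder z :=
  isOfFinOrder_iff_pow_eq_one.symm

lemma IsSumAtMostTwoRootsOfUnity.exists_sum_eq {z : ℂ} (hz : IsSumAtMostTwoRootsOfUnity z) :
    ∃ m ≤ 2, ∃ u : Fin m → ℂ, (∀ j, IsOfFinOrder (u j)) ∧ ∑ j, u j = z := by
  simp only [IsSumAtMostTwoRootsOfUnity, isRootOfUnity_iff_isOfFinOrder] at hz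
  rcases hz with rfl | hz | ⟨u, v, hu, hv, rfl⟩
  · exact ⟨0, by simp, ![], by simp⟩
  · exact ⟨1, by simp, ![z], by simpa using hz⟩
  · exact ⟨2, le_rfl, ![u, v], by simp [Fin.forall_fin_two, hu, hv]⟩

lemma prime_dvd_sum_pow_sub_sum_pow {R ι : Type*} [CommRing R] {p : ℕ} (hp : p.Prime)
    (s : Finset ι) (f : ι → R) : (p : R) ∣ (∑ i ∈ s, f i) ^ p - ∑ i ∈ s, f i ^ p := by
  by_cases hunit : IsUnit (p : R)
  · exact hunit.dvd
  have : Fact p.Prime := ⟨hp⟩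
  have : CharP (R ⧸ Ideal.span {(p : R)}) p := CharP.quotient R p hunit
  rw [← Ideal.mem_span_singleton, ← Ideal.Quotient.eq]
  simp only [map_pow, map_sum, sum_pow_char]

section NumberField

open NumberField

variable {K : Type*} [Field K] [NumberField K]

lemma house_sub_le (α β : K) : house (α - β) ≤ house α + house β := by
  simpa only [house, map_sub] using norm_sub_le _ _

lemma house_natCast (n : ℕ) : house (n : K) = n := by
  simpa using house_intCast (K := K) n

lemma house_eq_one_of_isOfFinOrder {x : K} (hx : IsOfFinOrder x) : house x = 1 := by
  have hnorm (φ : K →+* ℂ) : ‖φ x‖₊ = 1 :=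
    NNReal.eq ((φ : K →* ℂ).isOfFinOrder hx).norm_eq_one
  simp [house_eq_sup', hnorm]

lemma house_sum_le_card {κ : Type*} [Fintype κ] {u : κ → K} (hu : ∀ j, IsOfFinOrder (u j)) :
    house (∑ j, u j) ≤ Fintype.card κ := by
  calc house (∑ j, u j) ≤ ∑ j, house (u j) := house_sum_le_sum_house _ _
    _ = Fintype.card κ := by simp [house_eq_one_of_isOfFinOrder (hu _)]

lemma eq_zero_of_natCast_dvd_of_house_lt {n : ℕ} {α : 𝓞 K} (hdvd : (n : 𝓞 K) ∣ α)
    (hlt : house (α : K) < n) : α = 0 := by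
  obtain ⟨β, rfl⟩ := hdvd
  by_contra hne
  have hβ : 1 ≤ house (β : K) :=
    one_le_house_of_isIntegral β.isIntegral_coe
      (RingOfIntegers.coe_ne_zero_iff.2 (right_ne_zero_of_mul hne))
  have hmul : house ((n * β : 𝓞 K) : K) = n * house (β : K) := by simp [house_nat_mul]
  exact hlt.not_ge (hmul ▸ le_mul_of_one_le_right n.cast_nonneg hβ)

lemma card_le_card_of_sum_ringOfIntegers_eq_sum {ι κ : Type*} [Fintype ι] [Fintype κ] {p : ℕ}
    (hp : p.Prime) {x : ι → 𝓞 K} {u : κ → 𝓞 K} (hx : ∀ i, x i ^ p = 1)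
    (hu : ∀ j, IsOfFinOrder (u j)) (hcard : Fintype.card ι + Fintype.card κ < p)
    (hsum : ∑ i, x i = ∑ j, u j) : Fintype.card ι ≤ Fintype.card κ := by
  have hdvd : (p : 𝓞 K) ∣ ∑ j, u j ^ p - Fintype.card ι := by
    have hdvd_x := prime_dvd_sum_pow_sub_sum_pow hp .univ x
    have hdvd_u := prime_dvd_sum_pow_sub_sum_pow hp .univ u
    simpa [hsum, hx] using dvd_sub hdvd_x hdvd_u
  have hhouse : house (∑ j, (u j : K) ^ p) ≤ Fintype.card κ :=
    house_sum_le_card fun j ↦ ((algebraMap (𝓞 K) K : 𝓞 K →* K).isOfFinOrder (hu j)).pow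
  have hlt : house ((∑ j, u j ^ p - Fintype.card ι : 𝓞 K) : K) < p := by
    calc house ((∑ j, u j ^ p - Fintype.card ι : 𝓞 K) : K)
        = house (∑ j, (u j : K) ^ p - Fintype.card ι) := by simp
      _ ≤ house (∑ j, (u j : K) ^ p) + house (Fintype.card ι : K) := house_sub_le _ _
      _ ≤ Fintype.card κ + Fintype.card ι := by rw [house_natCast]; gcongr
      _ < p := by exact_mod_cast add_comm (Fintype.card κ) _ ▸ hcard
  have heq : ∑ j, u j ^ p = (Fintype.card ι : 𝓞 K) :=
    sub_eq_zero.1 (eq_zero_of_natCast_dvd_of_house_lt hdvd hlt)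
  have heq_K : ∑ j, (u j : K) ^ p = Fintype.card ι := by
    simpa using congrArg (algebraMap (𝓞 K) K) heq
  rw [heq_K, house_natCast] at hhouse
  exact_mod_cast hhouse

end NumberField

lemma exists_ringOfIntegers_embedding_of_isIntegral {F : Type*} [Field F] [CharZero F] {S : Set F}
    (hfin : S.Finite) (hint : ∀ z ∈ S, IsIntegral ℤ z) :
    ∃ (K : IntermediateField ℚ F) (_ : NumberField K) (f : NumberField.RingOfIntegers K →+* F),
      Function.Injective f ∧ S ⊆ Set.range f := by
  let K := IntermediateField.adjoin ℚ S
  have : Finite S := hfin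
  have : FiniteDimensional ℚ K :=
    IntermediateField.finiteDimensional_adjoin fun z hz ↦ (hint z hz).tower_top
  have hK : Function.Injective (algebraMap K F) := (algebraMap K F).injective
  refine ⟨K, ⟨⟩, (algebraMap K F).comp (algebraMap _ K),
    hK.comp NumberField.RingOfIntegers.coe_injective, fun z hz ↦ ?_⟩
  let y : K := ⟨z, IntermediateField.subset_adjoin _ _ hz⟩
  have hy : IsIntegral ℤ y := (isIntegral_algebraMap_iff hK).1 (hint z hz)
  exact ⟨⟨y, hy⟩, rfl⟩

/-- The bound `< p` is sharp: moving `m` terms of `1 + ζ + ⋯ + ζ ^ (p - 1) = 0` to the right-hand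
side gives `p - m` terms `x i = ζ ^ a` against `m` terms `u j = -ζ ^ b`. -/
lemma card_le_card_of_sum_eq_sum {F ι κ : Type*} [Field F] [CharZero F] [Fintype ι] [Fintype κ]
    {p : ℕ} (hp : p.Prime) {x : ι → F} {u : κ → F} (hx : ∀ i, x i ^ p = 1)
    (hu : ∀ j, IsOfFinOrder (u j)) (hcard : Fintype.card ι + Fintype.card κ < p)
    (hsum : ∑ i, x i = ∑ j, u j) : Fintype.card ι ≤ Fintype.card κ := by
  have hint : ∀ z ∈ Set.range x ∪ Set.range u, IsIntegral ℤ z := by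
    rintro z (⟨i, rfl⟩ | ⟨j, rfl⟩)
    · exact .of_pow hp.pos (hx i ▸ isIntegral_one)
    · obtain ⟨n, hn, hpow⟩ := (hu j).exists_pow_eq_one
      exact .of_pow hn (hpow ▸ isIntegral_one)
  obtain ⟨K, _, f, hf, hS⟩ := exists_ringOfIntegers_embedding_of_isIntegral
    ((Set.finite_range x).union (Set.finite_range u)) hint
  choose X hX using fun i ↦ hS (Set.mem_union_left _ (Set.mem_range_self i))
  choose U hU using fun j ↦ hS (Set.mem_union_right _ (Set.mem_range_self j))
  have hX_pow (i : ι) : X i ^ p = 1 := hf (by rw [map_pow, hX, hx, map_one])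
  have hU_fin (j : κ) : IsOfFinOrder (U j) :=
    (Function.Injective.isOfFinOrder_iff (f := (f : _ →* F)) hf).1 (by simpa [hU] using hu j)
  have hXU : ∑ i, X i = ∑ j, U j := hf (by simpa only [map_sum, hX, hU] using hsum)
  exact card_le_card_of_sum_ringOfIntegers_eq_sum hp hX_pow hU_fin hcard hXU

lemma not_isSumAtMostTwoRootsOfUnity_mul_sum {ι : Type*} [Fintype ι] {p : ℕ} (hp : p.Prime)
    (hι : 2 < Fintype.card ι) (hιp : Fintype.card ι + 2 < p) {ε : ℂ} (hε : IsOfFinOrder ε)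
    {x : ι → ℂ} (hx : ∀ i, x i ^ p = 1) : ¬ IsSumAtMostTwoRootsOfUnity (ε * ∑ i, x i) := by
  intro h
  obtain ⟨m, hm, u, hu, hsum⟩ := h.exists_sum_eq
  have hε_inv : IsOfFinOrder ε⁻¹ := by
    simpa [isOfFinOrder_iff_pow_eq_one] using hε
  have hsum' : ∑ i, x i = ∑ j, ε⁻¹ * u j := by
    rw [← Finset.mul_sum, hsum, inv_mul_cancel_left₀ hε.isUnit.ne_zero]
  have hle := card_le_card_of_sum_eq_sum hp hx (fun j ↦ hε_inv.mul (hu j))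
    (by rw [Fintype.card_fin]; lia) hsum'
  rw [Fintype.card_fin] at hle
  lia

/-- The regular character vanishes off the identity, so only the part `ε (λ₁ + ⋯ + λₖ)` of `χ`
appears. -/
theorem stmt_13_general {G ι : Type*} [Group G] [Finite G] [Fintype ι] {p : ℕ} (hp : p.Prime)
    (hpG : p ∣ Nat.card G) (hι : 2 < Fintype.card ι) (hιp : Fintype.card ι + 2 < p)
    {ε : ℂ} (hε : IsOfFinOrder ε) (lam : ι → (G →* ℂˣ)) :
    ¬ ∀ g : G, g ≠ 1 → IsSumAtMostTwoRootsOfUnity (ε * ∑ i, (lam i g : ℂ)) := by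
  intro h
  have : Fact p.Prime := ⟨hp⟩
  obtain ⟨g, hg⟩ := exists_prime_orderOf_dvd_card' p hpG
  have hg_ne : g ≠ 1 := by
    rintro rfl
    exact hp.one_lt.ne (orderOf_one.symm.trans hg)
  have hroot (i : ι) : (lam i g : ℂ) ^ p = 1 := by
    rw [← Units.val_pow_eq_pow_val, ← map_pow, ← hg, pow_orderOf_eq_one, map_one, Units.val_one]
  exact not_isSumAtMostTwoRootsOfUnity_mul_sum hp hι hιp hε hroot (h g hg_ne)

theorem stmt_13 {C : Type*} [CommGroup C] [Fintype C] [DecidableEq C] [IsCyclic C]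
    (p : ℕ) (hp : p.Prime) (hp7 : 7 ≤ p) (hcard : Fintype.card C = 3 * p) :
    ¬ ∃ χ : C → ℂ,
        (∀ x : C, x ≠ 1 → IsSumAtMostTwoRootsOfUnity (χ x)) ∧
        ((∃ (a ε : ℤ) (lam : Fin 3 → (C →* ℂˣ)),
            (ε = 1 ∨ ε = -1) ∧ Function.Injective lam ∧
            ∀ g : C, χ g = (a : ℂ) * (if g = 1 then (Fintype.card C : ℂ) else 0)
              + (ε : ℂ) * ∑ i : Fin 3, (lam i g : ℂ)) ∨
         (∃ (a ε : ℤ) (lam : Fin 4 → (C →* ℂˣ)),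
            (ε = 1 ∨ ε = -1) ∧ Function.Injective lam ∧
            ∀ g : C, χ g = (a : ℂ) * (if g = 1 then (Fintype.card C : ℂ) else 0)
              + (ε : ℂ) * ∑ i : Fin 4, (lam i g : ℂ))) := by
  rintro ⟨χ, hχ, ⟨a, ε, lam, hε, -, h⟩ | ⟨a, ε, lam, hε, -, h⟩⟩ <;>
    exact stmt_13_general hp (by simp [hcard]) (by simp) (by rw [Fintype.card_fin]; lia)
      (ε := ε) (isOfFinOrder_iff_pow_eq_one.2 ⟨2, two_pos, by rcases hε with rfl | rfl <;> simp⟩)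
      lam fun g hg ↦ by simpa [h, hg] using hχ g hg
end

section
/- Let C be a cyclic group of order 15. Then there is no generalized character χ of C whose values on all nonidentity elements of C are sums of at most two roots of unity and which can be written either as χ = a·ρ_C + ε·(λ₁ + ⋯ + λ₅) or as χ = a·ρ_C + ε·(λ₁ + ⋯ + λ₆), for some integer a, sign ε ∈ {1, −1}, and pairwise distinct irreducible characters λᵢ of C (i.e., C admits no such character of type (5,0), (0,5), (6,0), or (0,6)). -/
/-!
Let `n = p * q` and let `F` be a sum of `k` distinct linear characters whose nonidentity values are
sums of at most two roots of unity. By Parseval, the nonnegative numbers `4 - |F x| ^ 2`, `x ≠ 1`,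
have a small sum. Over the generators `x` they form a Galois orbit of algebraic integers, so their
product is an integer, and it is less than `1` by AM-GM. Hence `|F x| = 2` for every generator, and
two roots of unity can only achieve this by being equal; as `n` is odd, `F = 2 * ε * μ` on the
generators, for a sign `ε` and a linear character `μ`.

Fourier inversion then determines all constituents of `F`. For nontrivial `α`, `β` with
`α ^ p = β ^ q = 1`, the product `F * (α - 1) * (β - 1)` vanishes off the generators, which decides
membership of `μ`, `μ * α`, `μ * β` and `μ * α * β`: up to complement, the constituents of `F` are
the `μ * φ` with `φ ^ p = 1` or `φ ^ q = 1`, `φ ≠ 1`. On elements of order `p` such an `F` has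
absolute value `q - 2 > 2`.
-/

open Finset Polynomial
open scoped ComplexConjugate

theorem IsRootOfUnity.norm_eq_one {u : ℂ} (hu : IsRootOfUnity u) : ‖u‖ = 1 := by
  obtain ⟨n, hn, hun⟩ := hu
  exact Complex.norm_eq_one_of_pow_eq_one hun hn.ne'

theorem IsRootOfUnity.neg {u : ℂ} (hu : IsRootOfUnity u) : IsRootOfUnity (-u) := by
  obtain ⟨n, hn, hun⟩ := hu
  exact ⟨2 * n, by positivity, by rw [(even_two_mul n).neg_pow, pow_mul', hun, one_pow]⟩

namespace IsSumAtMostTwoRootsOfUnity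

variable {z : ℂ}

theorem neg (hz : IsSumAtMostTwoRootsOfUnity z) : IsSumAtMostTwoRootsOfUnity (-z) := by
  rcases hz with rfl | hz | ⟨u, v, hu, hv, rfl⟩
  · exact Or.inl neg_zero
  · exact Or.inr (Or.inl hz.neg)
  · exact Or.inr (Or.inr ⟨-u, -v, hu.neg, hv.neg, neg_add u v⟩)

theorem norm_le_two (hz : IsSumAtMostTwoRootsOfUnity z) : ‖z‖ ≤ 2 := by
  rcases hz with rfl | hz | ⟨u, v, hu, hv, rfl⟩
  · simp
  · simp [hz.norm_eq_one]
  · calc ‖u + v‖ ≤ ‖u‖ + ‖v‖ := norm_add_le u v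
      _ = 2 := by rw [hu.norm_eq_one, hv.norm_eq_one]; norm_num

theorem exists_eq_two_mul_of_norm_eq_two (hz : IsSumAtMostTwoRootsOfUnity z) (h : ‖z‖ = 2) :
    ∃ u, IsRootOfUnity u ∧ z = 2 * u := by
  rcases hz with rfl | hz | ⟨u, v, hu, hv, rfl⟩
  · simp at h
  · simp [hz.norm_eq_one] at h
  · have huv : u = v := eq_of_norm_eq_of_norm_add_eq (hu.norm_eq_one.trans hv.norm_eq_one.symm)
      (by rw [h, hu.norm_eq_one, hv.norm_eq_one]; norm_num)
    exact ⟨u, hu, by rw [← huv, two_mul]⟩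

end IsSumAtMostTwoRootsOfUnity

theorem prod_lt_one_of_sum_lt_card {ι : Type*} {s : Finset ι} {f : ι → ℝ}
    (hf : ∀ i ∈ s, 0 ≤ f i) (hsum : ∑ i ∈ s, f i < #s) : ∏ i ∈ s, f i < 1 :=
  calc ∏ i ∈ s, f i ≤ ∏ i ∈ s, Real.exp (f i - 1) :=
        prod_le_prod hf fun i _ => by linarith [Real.add_one_le_exp (f i - 1)]
    _ < 1 := by
        rw [← Real.exp_sum, Real.exp_lt_one_iff, sum_sub_distrib, sum_const, nsmul_one]
        linarith

theorem prod_primitiveRoots_aeval_eq_resultant {K : Type*} [Field K] [IsAlgClosed K] (n : ℕ)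
    [NeZero (n : K)] (Q : ℤ[X]) :
    ∏ z ∈ primitiveRoots n K, aeval z Q = ((resultant (cyclotomic n ℤ) Q : ℤ) : K) := by
  have heval := resultant_eq_prod_eval (cyclotomic n K) (Q.map (Int.castRingHom K)) Q.natDegree
    natDegree_map_le (IsAlgClosed.splits _)
  rw [cyclotomic.roots_eq_primitiveRoots_val, (cyclotomic.monic n K).leadingCoeff, one_pow,
    one_mul, natDegree_cyclotomic, ← map_cyclotomic n (Int.castRingHom K), resultant_map_map,
    eq_intCast] at heval
  rw [natDegree_cyclotomic, heval, Finset.prod]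
  exact congrArg Multiset.prod (Multiset.map_congr rfl fun z _ => (eval_map_algebraMap Q z).symm)

theorem aeval_eq_zero_of_isPrimitiveRoot {K : Type*} [Field K] [CharZero K] {n : ℕ} (hn : 0 < n)
    {Q : ℤ[X]} {z w : K} (hz : IsPrimitiveRoot z n) (hw : IsPrimitiveRoot w n)
    (h : aeval z Q = 0) : aeval w Q = 0 := by
  have hdvd : cyclotomic n ℤ ∣ Q := by
    rw [cyclotomic_eq_minpoly hz hn]
    exact minpoly.isIntegrallyClosed_dvd (hz.isIntegral hn) h
  rw [cyclotomic_eq_minpoly hw hn] at hdvd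
  exact aeval_eq_zero_of_dvd_aeval_eq_zero hdvd (minpoly.aeval ℤ w)

theorem eq_zero_of_sum_primitiveRoots_lt_totient {n : ℕ} (hn : 0 < n) {Q : ℤ[X]} {r : ℂ → ℝ}
    (hr : ∀ z ∈ primitiveRoots n ℂ, aeval z Q = r z) (hr0 : ∀ z ∈ primitiveRoots n ℂ, 0 ≤ r z)
    (hsum : ∑ z ∈ primitiveRoots n ℂ, r z < n.totient) :
    ∀ z ∈ primitiveRoots n ℂ, r z = 0 := by
  have : NeZero (n : ℂ) := ⟨Nat.cast_ne_zero.2 hn.ne'⟩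
  have hprod : ∏ z ∈ primitiveRoots n ℂ, r z = ((resultant (cyclotomic n ℤ) Q : ℤ) : ℝ) := by
    have h := prod_primitiveRoots_aeval_eq_resultant (K := ℂ) n Q
    rw [prod_congr rfl hr] at h
    exact_mod_cast h
  have hlt : resultant (cyclotomic n ℤ) Q < 1 := by
    rw [← Complex.card_primitiveRoots] at hsum
    exact_mod_cast hprod ▸ prod_lt_one_of_sum_lt_card hr0 hsum
  have hnonneg : 0 ≤ resultant (cyclotomic n ℤ) Q := by
    exact_mod_cast hprod ▸ prod_nonneg hr0
  obtain ⟨w, hw, hrw⟩ : ∃ w ∈ primitiveRoots n ℂ, r w = 0 := by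
    rw [← prod_eq_zero_iff, hprod]
    exact_mod_cast (by lia : resultant (cyclotomic n ℤ) Q = 0)
  intro z hz
  have hQz : aeval z Q = 0 := aeval_eq_zero_of_isPrimitiveRoot hn
    (isPrimitiveRoot_of_mem_primitiveRoots hw) (isPrimitiveRoot_of_mem_primitiveRoots hz)
    (by rw [hr w hw, hrw, Complex.ofReal_zero])
  exact_mod_cast (hr z hz).symm.trans hQz

theorem eq_pow_or_eq_neg_pow_of_mem_adjoin {L : Type*} [Field L] [CharZero L] {n : ℕ}
    (hn : Odd n) {ζ u : L} (hζ : IsPrimitiveRoot ζ n) (hu : IsOfFinOrder u)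
    (hmem : u ∈ IntermediateField.adjoin ℚ {ζ}) : ∃ r : ℕ, u = ζ ^ r ∨ u = -ζ ^ r := by
  have : NeZero n := ⟨hn.pos.ne'⟩
  have hζint : IsIntegral ℚ ζ := hζ.isIntegral hn.pos |>.tower_top
  have : FiniteDimensional ℚ (IntermediateField.adjoin ℚ {ζ}) :=
    IntermediateField.adjoin.finiteDimensional hζint
  have : NumberField (IntermediateField.adjoin ℚ {ζ}) := ⟨⟩
  have : IsCyclotomicExtension {n} ℚ (IntermediateField.adjoin ℚ {ζ}) := by
    change IsCyclotomicExtension {n} ℚ (IntermediateField.adjoin ℚ {ζ}).toSubalgebra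
    rw [IntermediateField.adjoin_simple_toSubalgebra_of_isAlgebraic hζint.isAlgebraic]
    exact hζ.adjoin_isCyclotomicExtension ℚ
  have hgen : IsPrimitiveRoot (IntermediateField.AdjoinSimple.gen ℚ ζ) n :=
    IsPrimitiveRoot.coe_submonoidClass_iff.1 hζ
  have hfin : IsOfFinOrder (⟨u, hmem⟩ : IntermediateField.adjoin ℚ {ζ}) :=
    Submonoid.isOfFinOrder_coe.1 hu
  obtain ⟨r, -, hr⟩ := hgen.exists_pow_or_neg_mul_pow_of_isOfFinOrder hn hfin
  exact ⟨r, hr.imp (congrArg Subtype.val) (congrArg Subtype.val)⟩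

section CharSum

variable {R : Type*} [CommRing R]

/-- The sum of the additive characters `x ↦ ψ (k * x)` for `k ∈ S`. For `R = ZMod n` and `ψ`
primitive these are the multiplicity-free characters of the cyclic group of order `n`. -/
def charSum (ψ : AddChar R ℂ) (S : Finset R) (x : R) : ℂ := ∑ k ∈ S, ψ (k * x)

theorem charSum_zero (ψ : AddChar R ℂ) (S : Finset R) : charSum ψ S 0 = #S := by simp [charSum]

open scoped Pointwise in
theorem charSum_neg_left [Finite R] [DecidableEq R] (ψ : AddChar R ℂ) (S : Finset R) (x : R) :
    charSum ψ (-S) x = conj (charSum ψ S x) := by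
  simp only [charSum, sum_neg_index, neg_mul, AddChar.map_neg_eq_conj, map_sum]

variable {ψ : AddChar R ℂ}

theorem sum_charSum_mul_apply_neg [Fintype R] [DecidableEq R] (hψ : ψ.IsPrimitive) (S : Finset R)
    (k : R) :
    ∑ x, charSum ψ S x * ψ (-(k * x)) = if k ∈ S then (Fintype.card R : ℂ) else 0 := by
  have horth (j : R) : ∑ x, ψ (j * x) * ψ (-(k * x))
      = if j = k then (Fintype.card R : ℂ) else 0 := by
    simpa [← AddChar.map_add_eq_mul, mul_comm, mul_sub, ← sub_eq_add_neg, sub_eq_zero]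
      using AddChar.sum_mulShift (j - k) hψ
  simp only [charSum, sum_mul]
  rw [sum_comm]
  simp only [horth, sum_ite_eq']

theorem sum_norm_sq_charSum [Fintype R] (hψ : ψ.IsPrimitive) (S : Finset R) :
    ∑ x, ‖charSum ψ S x‖ ^ 2 = Fintype.card R * #S := by
  classical
  have hsq (x : R) : ((‖charSum ψ S x‖ ^ 2 : ℝ) : ℂ)
      = ∑ k ∈ S, charSum ψ S x * ψ (-(k * x)) := by
    rw [Complex.ofReal_pow, ← Complex.mul_conj', ← mul_sum]
    simp only [charSum, map_sum, AddChar.map_neg_eq_conj]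
  have h : ∑ x, ((‖charSum ψ S x‖ ^ 2 : ℝ) : ℂ) = Fintype.card R * #S := by
    simp only [hsq]
    rw [sum_comm]
    simp only [sum_charSum_mul_apply_neg hψ]
    rw [sum_congr rfl fun k hk => if_pos hk, sum_const, nsmul_eq_mul, mul_comm]
  exact_mod_cast h

theorem sum_sub_norm_sq_charSum [Fintype R] [DecidableEq R] (hψ : ψ.IsPrimitive) (S : Finset R)
    (c : ℝ) :
    ∑ x ∈ univ.erase 0, (c - ‖charSum ψ S x‖ ^ 2)
      = c * (Fintype.card R - 1) + #S ^ 2 - Fintype.card R * #S := by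
  rw [sum_erase_eq_sub (mem_univ 0), sum_sub_distrib, sum_norm_sq_charSum hψ, charSum_zero,
    Complex.norm_natCast, sum_const, nsmul_eq_mul, card_univ]
  ring

-- Multiplying `charSum ψ S` by `(ψ (-(a * x)) - 1) * (ψ (-(b * x)) - 1)` kills the values outside
-- the hypothesis, and its Fourier coefficient at `m` is the alternating sum on the left.
theorem indicator_rectangle_eq_of_charSum_eq [Finite R] [DecidableEq R] (hψ : ψ.IsPrimitive)
    {S : Finset R} {m a b : R} {c : ℂ} (ha : a ≠ 0) (hb : b ≠ 0) (hab : a + b ≠ 0)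
    (hS : ∀ x, a * x ≠ 0 → b * x ≠ 0 → charSum ψ S x = c * ψ (m * x)) :
    (if m ∈ S then 1 else 0) - (if m + a ∈ S then 1 else 0) - (if m + b ∈ S then 1 else 0)
      + (if m + a + b ∈ S then 1 else 0) = c := by
  have := Fintype.ofFinite R
  have hcard : (Fintype.card R : ℂ) ≠ 0 := Nat.cast_ne_zero.2 Fintype.card_ne_zero
  have hsum {d : R} (hd : d ≠ 0) : ∑ x, ψ (-(d * x)) = 0 := by
    simpa [hd, mul_comm] using AddChar.sum_mulShift (-d) hψ
  refine mul_left_cancel₀ hcard ?_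
  calc _ = ∑ x, charSum ψ S x * ψ (-(m * x)) - ∑ x, charSum ψ S x * ψ (-((m + a) * x))
        - ∑ x, charSum ψ S x * ψ (-((m + b) * x))
        + ∑ x, charSum ψ S x * ψ (-((m + a + b) * x)) := by
        simp only [sum_charSum_mul_apply_neg hψ, mul_add, mul_sub, mul_ite, mul_one, mul_zero]
    _ = ∑ x, charSum ψ S x * ψ (-(m * x)) * ((ψ (-(a * x)) - 1) * (ψ (-(b * x)) - 1)) := by
        rw [← sum_sub_distrib, ← sum_sub_distrib, ← sum_add_distrib]
        refine sum_congr rfl fun x _ => ?_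
        simp only [add_mul, neg_add, AddChar.map_add_eq_mul]
        ring
    _ = ∑ x, c * ((ψ (-(a * x)) - 1) * (ψ (-(b * x)) - 1)) := by
        refine sum_congr rfl fun x _ => ?_
        by_cases hax : a * x = 0
        · simp [hax]
        by_cases hbx : b * x = 0
        · simp [hbx]
        rw [hS x hax hbx, mul_assoc c, ← AddChar.map_add_eq_mul, add_neg_cancel,
          AddChar.map_zero_eq_one, mul_one]
    _ = c * ∑ x, (ψ (-((a + b) * x)) - ψ (-(a * x)) - ψ (-(b * x)) + 1) := by
        rw [mul_sum]
        refine sum_congr rfl fun x _ => ?_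
        simp only [add_mul, neg_add, AddChar.map_add_eq_mul]
        ring
    _ = Fintype.card R * c := by
        rw [sum_add_distrib, sum_sub_distrib, sum_sub_distrib, hsum hab, hsum ha, hsum hb]
        simp [mul_comm]

end CharSum

section ZMod

variable {n : ℕ} [NeZero n] {ψ : AddChar (ZMod n) ℂ}

theorem isPrimitiveRoot_apply_iff (hψ : ψ.IsPrimitive) (x : ZMod n) :
    IsPrimitiveRoot (ψ x) n ↔ IsUnit x := by
  have hone : IsPrimitiveRoot (ψ 1) n := by
    refine ⟨by simp [← AddChar.map_nsmul_eq_pow], fun k hk => ?_⟩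
    rw [← AddChar.map_nsmul_eq_pow, hψ.zmod_char_eq_one_iff, nsmul_one] at hk
    exact (ZMod.natCast_eq_zero_iff k n).1 hk
  rw [← ZMod.natCast_zmod_val x, ← nsmul_one x.val, AddChar.map_nsmul_eq_pow,
    hone.pow_iff_coprime (NeZero.pos n), nsmul_one, ZMod.isUnit_iff_coprime]

theorem primitiveRoots_eq_image (hψ : ψ.IsPrimitive) [DecidablePred (IsUnit (M := ZMod n))] :
    primitiveRoots n ℂ = image ψ {x | IsUnit x} := by
  ext z
  simp only [mem_primitiveRoots (NeZero.pos n), mem_image, mem_filter_univ]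
  constructor
  · intro hz
    obtain ⟨k, -, rfl⟩ := ((isPrimitiveRoot_apply_iff hψ 1).2 isUnit_one).eq_pow_of_pow_eq_one
      hz.pow_eq_one
    rw [← AddChar.map_nsmul_eq_pow] at hz ⊢
    exact ⟨_, (isPrimitiveRoot_apply_iff hψ _).1 hz, rfl⟩
  · rintro ⟨x, hx, rfl⟩
    exact (isPrimitiveRoot_apply_iff hψ x).2 hx

theorem injective_of_isPrimitive (hψ : ψ.IsPrimitive) : Function.Injective ψ := fun x y hxy => by
  rw [← sub_eq_zero, ← hψ.zmod_char_eq_one_iff, AddChar.map_sub_eq_div, hxy,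
    div_self (ψ.val_isUnit y).ne_zero]

/-- The generating polynomial of a set of residues: its value at `ψ x` is `charSum ψ S x`, which
makes the values of `charSum` at units Galois conjugate. -/
noncomputable def residuePolynomial (S : Finset (ZMod n)) : ℤ[X] := ∑ k ∈ S, X ^ k.val

theorem aeval_residuePolynomial (ψ : AddChar (ZMod n) ℂ) (S : Finset (ZMod n)) (x : ZMod n) :
    aeval (ψ x) (residuePolynomial S) = charSum ψ S x := by
  simp only [residuePolynomial, charSum, map_sum, map_pow, aeval_X, ← AddChar.map_nsmul_eq_pow,
    nsmul_eq_mul, ZMod.natCast_zmod_val]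

open scoped Pointwise in
theorem norm_sq_charSum_eq_of_isUnit [Nontrivial (ZMod n)] (hψ : ψ.IsPrimitive)
    {S : Finset (ZMod n)} {c : ℕ} (hle : ∀ x ≠ 0, ‖charSum ψ S x‖ ^ 2 ≤ c)
    (htrace : c * n + #S ^ 2 < n.totient + n * #S + c) {x : ZMod n} (hx : IsUnit x) :
    ‖charSum ψ S x‖ ^ 2 = c := by
  classical
  let P := residuePolynomial S
  have hP (y : ZMod n) : aeval (ψ y) P = charSum ψ S y := aeval_residuePolynomial ψ S y
  have hmem {z : ℂ} : z ∈ primitiveRoots n ℂ ↔ ∃ y, IsUnit y ∧ ψ y = z := by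
    simp [primitiveRoots_eq_image hψ]
  have hsum : ∑ z ∈ primitiveRoots n ℂ, (c - ‖aeval z P‖ ^ 2) < n.totient := by
    calc ∑ z ∈ primitiveRoots n ℂ, (c - ‖aeval z P‖ ^ 2)
        = ∑ y with IsUnit y, (c - ‖charSum ψ S y‖ ^ 2) := by
          simp only [primitiveRoots_eq_image hψ, sum_image (injective_of_isPrimitive hψ).injOn, hP]
      _ ≤ ∑ y ∈ univ.erase 0, (c - ‖charSum ψ S y‖ ^ 2) :=
          sum_le_sum_of_subset_of_nonneg
            (fun y hy => mem_erase.2 ⟨((mem_filter_univ y).1 hy).ne_zero, mem_univ y⟩)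
            fun y hy _ => sub_nonneg.2 (hle y (ne_of_mem_erase hy))
      _ < n.totient := by
          rw [sum_sub_norm_sq_charSum hψ, ZMod.card]
          have htraceR : (c * n + #S ^ 2 : ℝ) < n.totient + n * #S + c := mod_cast htrace
          linarith
  have hzero := eq_zero_of_sum_primitiveRoots_lt_totient (NeZero.pos n)
    (Q := C (c : ℤ) - P * residuePolynomial (-S)) ?_ ?_ hsum (ψ x) (hmem.2 ⟨x, hx, rfl⟩)
  · rw [hP] at hzero
    linarith
  · intro z hz
    obtain ⟨y, -, rfl⟩ := hmem.1 hz
    simp [P, aeval_residuePolynomial, charSum_neg_left, Complex.mul_conj']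
  · intro z hz
    obtain ⟨y, hy, rfl⟩ := hmem.1 hz
    rw [hP]
    exact sub_nonneg.2 (hle y hy.ne_zero)

theorem exists_charSum_eq_of_isUnit (hn : Odd n) (hψ : ψ.IsPrimitive) {S : Finset (ZMod n)}
    {c : ℕ} (hc : c ≠ 0) {u : ℂ} (hu : IsRootOfUnity u) (hS : charSum ψ S 1 = c * u) :
    ∃ (ε : ℤ) (m : ZMod n), (ε = 1 ∨ ε = -1) ∧
      ∀ x, IsUnit x → charSum ψ S x = c * ε * ψ (m * x) := by
  have hone := (isPrimitiveRoot_apply_iff hψ 1).2 isUnit_one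
  have hmem : u ∈ IntermediateField.adjoin ℚ {ψ 1} := by
    have hu_eq : u = charSum ψ S 1 / c := by
      rw [hS, mul_div_cancel_left₀ u (Nat.cast_ne_zero.2 hc)]
    rw [hu_eq, ← aeval_residuePolynomial, residuePolynomial, map_sum]
    simp only [map_pow, aeval_X]
    exact div_mem (sum_mem fun k _ => pow_mem (IntermediateField.mem_adjoin_simple_self ℚ _) _)
      (natCast_mem _ c)
  obtain ⟨r, ε, hε, hur⟩ : ∃ (r : ℕ) (ε : ℤ), (ε = 1 ∨ ε = -1) ∧ u = ε * ψ 1 ^ r := by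
    obtain ⟨r, hr | hr⟩ := eq_pow_or_eq_neg_pow_of_mem_adjoin hn hone
      (isOfFinOrder_iff_pow_eq_one.2 hu) hmem
    · exact ⟨r, 1, Or.inl rfl, by simpa using hr⟩
    · exact ⟨r, -1, Or.inr rfl, by simpa using hr⟩
  refine ⟨ε, r, hε, fun x hx => ?_⟩
  have hroot := aeval_eq_zero_of_isPrimitiveRoot (NeZero.pos n)
    (Q := residuePolynomial S - C (c * ε) * X ^ r) hone ((isPrimitiveRoot_apply_iff hψ x).2 hx)
    (by simp [aeval_residuePolynomial, hS, hur, mul_assoc])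
  rw [← nsmul_eq_mul (r : ℕ) x, AddChar.map_nsmul_eq_pow, ← sub_eq_zero]
  simpa [aeval_residuePolynomial] using hroot

end ZMod

theorem sum_torsion_apply_mul_eq_zero {R : Type*} [CommRing R] [Fintype R] [DecidableEq R]
    {ψ : AddChar R ℂ} {d a x : R} (ha : d * a = 0) (hx : ψ (a * x) ≠ 1) :
    ∑ t with d * t = 0, ψ (t * x) = 0 := by
  have hshift : ψ (a * x) * ∑ t with d * t = 0, ψ (t * x) = ∑ t with d * t = 0, ψ (t * x) := by
    rw [mul_sum]
    refine sum_equiv (Equiv.addLeft a) (fun t => ?_) fun t _ => ?_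
    · simp [mul_add, ha]
    · rw [Equiv.coe_addLeft, add_mul, AddChar.map_add_eq_mul]
  exact (mul_left_eq_self₀.1 hshift).resolve_left hx

theorem card_torsion_zmod {n : ℕ} [NeZero n] (d : ℕ) :
    #{t : ZMod n | (d : ZMod n) * t = 0} = n.gcd d := by
  have h := IsAddCyclic.card_nsmulAddMonoidHom_ker (ZMod n) d
  rw [Nat.card_zmod] at h
  exact (Nat.subtype_card _ fun t => by simp [AddMonoidHom.mem_ker]).symm.trans h

theorem eq_zero_of_coprime_mul_eq_zero {R : Type*} [CommRing R] {p q : ℕ} (hpq : p.Coprime q)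
    {t : R} (hp : (p : R) * t = 0) (hq : (q : R) * t = 0) : t = 0 := by
  obtain ⟨u, v, huv⟩ := (Nat.isCoprime_iff_coprime.2 hpq).map (Int.castRingHom R)
  simp only [eq_intCast, Int.cast_natCast] at huv
  linear_combination (-t) * huv + u * hp + v * hq

theorem exists_torsion_add_torsion {R : Type*} [CommRing R] {p q : ℕ} (hpq : p.Coprime q)
    (h0 : (p : R) * q = 0) (t : R) : ∃ a b : R, (p : R) * a = 0 ∧ (q : R) * b = 0 ∧ a + b = t := by
  obtain ⟨u, v, huv⟩ := (Nat.isCoprime_iff_coprime.2 hpq).map (Int.castRingHom R)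
  simp only [eq_intCast, Int.cast_natCast] at huv
  exact ⟨v * q * t, u * p * t, by linear_combination v * t * h0,
    by linear_combination u * t * h0, by linear_combination t * huv⟩

theorem zmod_natCast_ne_zero {d e : ℕ} (he : 0 < e) (hd : 1 < d) : (e : ZMod (d * e)) ≠ 0 :=
  (ZMod.natCast_eq_zero_iff _ _).not.2 (Nat.not_dvd_of_pos_of_lt he (lt_mul_of_one_lt_left he hd))

section Biprime

variable {p q : ℕ}

theorem isUnit_of_torsion_mul_ne_zero (hp : p.Prime) (hq : q.Prime) {a b x : ZMod (p * q)}
    (ha : (p : ZMod (p * q)) * a = 0) (hb : (q : ZMod (p * q)) * b = 0)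
    (hax : a * x ≠ 0) (hbx : b * x ≠ 0) : IsUnit x := by
  have : NeZero (p * q) := ⟨mul_ne_zero hp.ne_zero hq.ne_zero⟩
  have mul_eq_zero_of_dvd {r : ℕ} {c : ZMod (p * q)} (hc : (r : ZMod (p * q)) * c = 0)
      (hr : r ∣ x.val) : c * x = 0 := by
    obtain ⟨k, hk⟩ := hr
    rw [← ZMod.natCast_zmod_val x, hk, Nat.cast_mul, ← mul_assoc, mul_comm c, hc, zero_mul]
  rw [← ZMod.natCast_zmod_val x, ZMod.isUnit_iff_coprime]
  exact Nat.Coprime.mul_right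
    ((hp.coprime_iff_not_dvd.2 fun h => hax (mul_eq_zero_of_dvd ha h)).symm)
    ((hq.coprime_iff_not_dvd.2 fun h => hbx (mul_eq_zero_of_dvd hb h)).symm)

variable [NeZero (p * q)] {ψ : AddChar (ZMod (p * q)) ℂ} {S : Finset (ZMod (p * q))}
  {ε : ℤ} {m : ZMod (p * q)}

theorem indicator_rectangle_eq_of_charSum_eq_on_units (hp : p.Prime) (hq : q.Prime) (hne : p ≠ q)
    (hψ : ψ.IsPrimitive) (hε : ε = 1 ∨ ε = -1)
    (hS : ∀ x, IsUnit x → charSum ψ S x = 2 * ε * ψ (m * x)) {a b : ZMod (p * q)}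
    (ha : (p : ZMod (p * q)) * a = 0) (hb : (q : ZMod (p * q)) * b = 0)
    (ha0 : a ≠ 0) (hb0 : b ≠ 0) :
    (if m ∈ S then (1 : ℂ) else 0) = (1 + ε) / 2 ∧
      (if m + a ∈ S then (1 : ℂ) else 0) = (1 - ε) / 2 ∧
      (if m + b ∈ S then (1 : ℂ) else 0) = (1 - ε) / 2 ∧
      (if m + a + b ∈ S then (1 : ℂ) else 0) = (1 + ε) / 2 := by
  have hab : a + b ≠ 0 := fun h => ha0 <|
    eq_zero_of_coprime_mul_eq_zero ((Nat.coprime_primes hp hq).2 hne) ha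
      (by rw [eq_neg_of_add_eq_zero_left h, mul_neg, hb, neg_zero])
  have hrect := indicator_rectangle_eq_of_charSum_eq hψ ha0 hb0 hab fun x hax hbx =>
    hS x (isUnit_of_torsion_mul_ne_zero hp hq ha hb hax hbx)
  rcases hε with rfl | rfl <;> split_ifs at hrect ⊢ <;> norm_num at hrect <;> norm_num

-- For `ε = -1` this says that `m + t ∈ S` iff `t ≠ 0` and either `p * t = 0` or `q * t = 0`; the
-- case `ε = 1` is the complement.
theorem indicator_eq_of_charSum_eq_on_units (hp : p.Prime) (hq : q.Prime) (hne : p ≠ q)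
    (hψ : ψ.IsPrimitive) (hε : ε = 1 ∨ ε = -1)
    (hS : ∀ x, IsUnit x → charSum ψ S x = 2 * ε * ψ (m * x)) (t : ZMod (p * q)) :
    (if m + t ∈ S then (1 : ℂ) else 0) = (1 + ε) / 2 - ε *
      ((if (p : ZMod (p * q)) * t = 0 then 1 else 0)
        + (if (q : ZMod (p * q)) * t = 0 then 1 else 0) - 2 * if t = 0 then 1 else 0) := by
  have hcop : p.Coprime q := (Nat.coprime_primes hp hq).2 hne
  have hpq : (p : ZMod (p * q)) * q = 0 := by rw [← Nat.cast_mul, ZMod.natCast_self]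
  have hqp : (q : ZMod (p * q)) * p = 0 := (mul_comm _ _).trans hpq
  have hp0 : (p : ZMod (p * q)) ≠ 0 := mul_comm q p ▸ zmod_natCast_ne_zero hp.pos hq.one_lt
  have hq0 : (q : ZMod (p * q)) ≠ 0 := zmod_natCast_ne_zero hq.pos hp.one_lt
  have hrect {a b : ZMod (p * q)} := indicator_rectangle_eq_of_charSum_eq_on_units
    (a := a) (b := b) hp hq hne hψ hε hS
  obtain ⟨a, b, ha, hb, rfl⟩ := exists_torsion_add_torsion hcop hpq t
  have hpb : (p : ZMod (p * q)) * b = 0 ↔ b = 0 :=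
    ⟨fun h => eq_zero_of_coprime_mul_eq_zero hcop h hb, fun h => by rw [h, mul_zero]⟩
  have hqa : (q : ZMod (p * q)) * a = 0 ↔ a = 0 :=
    ⟨fun h => eq_zero_of_coprime_mul_eq_zero hcop ha h, fun h => by rw [h, mul_zero]⟩
  rw [mul_add, mul_add, ha, hb, zero_add, add_zero, ← add_assoc]
  simp only [hpb, hqa]
  rcases eq_or_ne a 0 with rfl | ha0 <;> rcases eq_or_ne b 0 with rfl | hb0
  · rw [add_zero, add_zero, (hrect hpq hqp hq0 hp0).1]
    norm_num
  · rw [add_zero, zero_add, (hrect hpq hb hq0 hb0).2.2.1, if_pos rfl, if_neg hb0]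
    ring
  · rw [add_zero, add_zero, (hrect ha hqp ha0 hp0).2.1, if_pos rfl, if_neg ha0]
    ring
  · have hab : a + b ≠ 0 := fun h => ha0 (hqa.1 (by
      rw [eq_neg_of_add_eq_zero_left h, mul_neg, hb, neg_zero]))
    rw [(hrect ha hb ha0 hb0).2.2.2, if_neg ha0, if_neg hb0, if_neg hab]
    ring

theorem charSum_natCast_eq (hp : p.Prime) (hq : q.Prime) (hne : p ≠ q)
    (hψ : ψ.IsPrimitive) (hε : ε = 1 ∨ ε = -1)
    (hS : ∀ x, IsUnit x → charSum ψ S x = 2 * ε * ψ (m * x)) :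
    charSum ψ S q = ψ (m * q) * (ε * (2 - q)) := by
  have hpq : (p : ZMod (p * q)) * q = 0 := by rw [← Nat.cast_mul, ZMod.natCast_self]
  have hqq : (q : ZMod (p * q)) * q ≠ 0 := fun h => by
    rw [← Nat.cast_mul, ZMod.natCast_eq_zero_iff] at h
    exact hne ((Nat.prime_dvd_prime_iff_eq hp hq).1 (Nat.dvd_of_mul_dvd_mul_right hq.pos h))
  have hall : ∑ t, ψ (t * (q : ZMod (p * q))) = 0 := by
    rw [AddChar.sum_mulShift _ hψ, if_neg fun h => hqq (by rw [h, mul_zero]), Nat.cast_zero]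
  have hp_torsion : ∑ t with (p : ZMod (p * q)) * t = 0, ψ (t * (q : ZMod (p * q))) = 0 :=
    sum_torsion_apply_mul_eq_zero hpq ((hψ.zmod_char_eq_one_iff (p * q) _).not.2 hqq)
  have hq_torsion : ∑ t with (q : ZMod (p * q)) * t = 0, ψ (t * (q : ZMod (p * q))) = q := by
    have hone (t : ZMod (p * q)) (ht : t ∈ ({t | q * t = 0} : Finset (ZMod (p * q)))) :
        ψ (t * q) = 1 := by
      rw [mul_comm t, (mem_filter_univ t).1 ht, AddChar.map_zero_eq_one]
    rw [sum_congr rfl hone, sum_const, card_torsion_zmod, Nat.gcd_mul_left_left, nsmul_one]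
  calc charSum ψ S q = ∑ k, (if k ∈ S then 1 else 0) * ψ (k * q) := by
        simp only [charSum, ite_mul, one_mul, zero_mul, sum_ite_mem, univ_inter]
    _ = ∑ t, (if m + t ∈ S then 1 else 0) * ψ ((m + t) * q) :=
        (Equiv.sum_comp (Equiv.addLeft m) fun k => (if k ∈ S then 1 else 0) * ψ (k * q)).symm
    _ = ψ (m * q) * ((1 + ε) / 2 * ∑ t, ψ (t * q)
          - ε * (∑ t with (p : ZMod (p * q)) * t = 0, ψ (t * q)
            + ∑ t with (q : ZMod (p * q)) * t = 0, ψ (t * q) - 2 * ∑ t with t = 0, ψ (t * q))) := by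
        simp only [indicator_eq_of_charSum_eq_on_units hp hq hne hψ hε hS, sum_filter, mul_sum,
          ← sum_add_distrib, ← sum_sub_distrib]
        refine sum_congr rfl fun t _ => ?_
        rw [add_mul, AddChar.map_add_eq_mul]
        split_ifs <;> ring
    _ = ψ (m * q) * (ε * (2 - q)) := by
        rw [hall, hp_torsion, hq_torsion, sum_filter, sum_ite_eq' univ 0, if_pos (mem_univ 0),
          zero_mul, AddChar.map_zero_eq_one]
        ring

theorem exists_not_isSumAtMostTwoRootsOfUnity_charSum (hp : p.Prime) (hq : q.Prime) (hp2 : 2 < p)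
    (hpq : p < q) (hψ : ψ.IsPrimitive)
    (htrace : 4 * (p * q) + #S ^ 2 < (p * q).totient + p * q * #S + 4) :
    ∃ x ≠ 0, ¬ IsSumAtMostTwoRootsOfUnity (charSum ψ S x) := by
  by_contra! hS
  have : Nontrivial (ZMod (p * q)) :=
    ZMod.nontrivial_iff.2 (Nat.one_lt_mul_iff.2 ⟨hp.pos, hq.pos, Or.inl hp.one_lt⟩).ne'
  have hnorm : ‖charSum ψ S 1‖ = 2 := by
    have hsq := norm_sq_charSum_eq_of_isUnit (c := 4) hψ (fun x hx =>
      (pow_le_pow_left₀ (norm_nonneg _) (hS x hx).norm_le_two 2).trans_eq (by norm_num))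
      htrace isUnit_one
    rw [← sq_eq_sq₀ (norm_nonneg _) zero_le_two, hsq]
    norm_num
  obtain ⟨u, hu, hone⟩ := (hS 1 one_ne_zero).exists_eq_two_mul_of_norm_eq_two hnorm
  have hodd : Odd (p * q) := (hp.odd_of_ne_two hp2.ne').mul (hq.odd_of_ne_two (hp2.trans hpq).ne')
  obtain ⟨ε, m, hε, hunits⟩ := exists_charSum_eq_of_isUnit hodd hψ two_ne_zero hu hone
  have hle : ‖charSum ψ S q‖ ≤ 2 := (hS q (zmod_natCast_ne_zero hq.pos hp.one_lt)).norm_le_two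
  have hval : charSum ψ S q = ψ (m * q) * (ε * (2 - q)) :=
    charSum_natCast_eq hp hq hpq.ne hψ hε (mod_cast hunits)
  have hnorm_q : ‖charSum ψ S q‖ = |2 - (q : ℝ)| := by
    have hε_norm : ‖(ε : ℂ)‖ = 1 := by rcases hε with rfl | rfl <;> simp
    rw [hval, norm_mul, norm_mul, AddChar.norm_apply, hε_norm, one_mul, one_mul,
      ← Real.norm_eq_abs, ← Complex.norm_real]
    push_cast
    rfl
  have hq5 : (5 : ℝ) ≤ q := by
    have := hq.odd_of_ne_two (hp2.trans hpq).ne'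
    exact_mod_cast (by grind : 5 ≤ q)
  rw [hnorm_q, abs_le] at hle
  linarith

end Biprime

theorem exists_charSum_eq_sum_monoidHom {C : Type*} [CommGroup C] [Finite C] [IsCyclic C] {n : ℕ}
    [NeZero n] (hn : Nat.card C = n) {ψ : AddChar (ZMod n) ℂ} (hψ : ψ.IsPrimitive) {ι : Type*}
    [Fintype ι] {lam : ι → (C →* ℂˣ)} (hlam : Function.Injective lam) :
    ∃ S : Finset (ZMod n), #S = Fintype.card ι ∧
      ∀ x ≠ 0, ∃ g : C, g ≠ 1 ∧ ∑ i, (lam i g : ℂ) = charSum ψ S x := by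
  obtain ⟨g, hgen⟩ := IsCyclic.exists_monoid_generator (α := C)
  have hg : orderOf g = n := (orderOf_eq_card_of_forall_mem_powers hgen).trans hn
  have hone := (isPrimitiveRoot_apply_iff hψ 1).2 isUnit_one
  have hpow (i : ι) : ∃ k : ZMod n, (lam i g : ℂ) = ψ k := by
    obtain ⟨k, -, hk⟩ := hone.eq_pow_of_pow_eq_one (ξ := (lam i g : ℂ)) (by
      rw [← Units.val_pow_eq_pow_val, ← map_pow, ← hn, pow_card_eq_one', map_one, Units.val_one])
    exact ⟨k • 1, by rw [AddChar.map_nsmul_eq_pow, hk]⟩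
  choose k hk using hpow
  have hkinj : Function.Injective k := fun i j hij => hlam <| MonoidHom.ext fun x => by
    obtain ⟨y, rfl⟩ := Submonoid.mem_powers_iff _ _ |>.1 (hgen x)
    rw [map_pow, map_pow, Units.ext ((hk i).trans (hij ▸ (hk j).symm))]
  refine ⟨univ.map ⟨k, hkinj⟩, by simp, fun x hx => ⟨g ^ x.val, ?_, ?_⟩⟩
  · intro hgx
    rw [← orderOf_dvd_iff_pow_eq_one, hg, ← ZMod.natCast_eq_zero_iff, ZMod.natCast_zmod_val] at hgx
    exact hx hgx
  · simp only [charSum, sum_map, Function.Embedding.coeFn_mk, map_pow, Units.val_pow_eq_pow_val, hk,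
      ← AddChar.map_nsmul_eq_pow, nsmul_eq_mul, ZMod.natCast_zmod_val, mul_comm]

-- By Parseval, `hk` says that the sum of `4 - |χ x| ^ 2` over `x ≠ 1` is less than the number of
-- generators of `C`.
theorem stmt_14_general {C : Type*} [CommGroup C] [Fintype C] [DecidableEq C] [IsCyclic C]
    {p q : ℕ} (hp : p.Prime) (hq : q.Prime) (hp2 : 2 < p) (hpq : p < q)
    (hcard : Fintype.card C = p * q) {k : ℕ}
    (hk : 4 * (p * q) + k ^ 2 < (p * q).totient + p * q * k + 4) :
    ¬ ∃ χ : C → ℂ,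
        (∀ x : C, x ≠ 1 → IsSumAtMostTwoRootsOfUnity (χ x)) ∧
        ∃ (a ε : ℤ) (lam : Fin k → (C →* ℂˣ)),
          (ε = 1 ∨ ε = -1) ∧ Function.Injective lam ∧
          ∀ g : C, χ g = (a : ℂ) * (if g = 1 then (Fintype.card C : ℂ) else 0)
            + (ε : ℂ) * ∑ i : Fin k, (lam i g : ℂ) := by
  rintro ⟨χ, hχ, a, ε, lam, hε, hlam, hχ_eq⟩
  have : NeZero (p * q) := ⟨mul_ne_zero hp.ne_zero hq.ne_zero⟩
  have hψ := ZMod.isPrimitive_stdAddChar (p * q)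
  obtain ⟨S, hScard, hS⟩ := exists_charSum_eq_sum_monoidHom
    (Nat.card_eq_fintype_card.trans hcard) hψ hlam
  rw [Fintype.card_fin] at hScard
  obtain ⟨x, hx, hFx⟩ :=
    exists_not_isSumAtMostTwoRootsOfUnity_charSum hp hq hp2 hpq hψ (hScard.symm ▸ hk)
  obtain ⟨g, hg, hgx⟩ := hS x hx
  have hχg : χ g = ε * charSum ZMod.stdAddChar S x := by
    rw [hχ_eq, if_neg hg, mul_zero, zero_add, hgx]
  refine hFx ?_
  rcases hε with rfl | rfl
  · simpa [hχg] using hχ g hg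
  · simpa [hχg] using (hχ g hg).neg

theorem stmt_14 {C : Type*} [CommGroup C] [Fintype C] [DecidableEq C] [IsCyclic C]
    (hcard : Fintype.card C = 15) :
    ¬ ∃ χ : C → ℂ,
        (∀ x : C, x ≠ 1 → IsSumAtMostTwoRootsOfUnity (χ x)) ∧
        ((∃ (a ε : ℤ) (lam : Fin 5 → (C →* ℂˣ)),
            (ε = 1 ∨ ε = -1) ∧ Function.Injective lam ∧
            ∀ g : C, χ g = (a : ℂ) * (if g = 1 then (Fintype.card C : ℂ) else 0)
              + (ε : ℂ) * ∑ i : Fin 5, (lam i g : ℂ)) ∨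
         (∃ (a ε : ℤ) (lam : Fin 6 → (C →* ℂˣ)),
            (ε = 1 ∨ ε = -1) ∧ Function.Injective lam ∧
            ∀ g : C, χ g = (a : ℂ) * (if g = 1 then (Fintype.card C : ℂ) else 0)
              + (ε : ℂ) * ∑ i : Fin 6, (lam i g : ℂ))) := by
  rintro ⟨χ, hχ, h | h⟩
  · exact stmt_14_general (p := 3) (q := 5) Nat.prime_three Nat.prime_five (by norm_num)
      (by norm_num) hcard (by decide) ⟨χ, hχ, h⟩
  · exact stmt_14_general (p := 3) (q := 5) Nat.prime_three Nat.prime_five (by norm_num)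
      (by norm_num) hcard (by decide) ⟨χ, hχ, h⟩
end

section
/- Let G be a finite group and let χ be a generalized character of G, with (integer) virtual degree d = χ(1), such that χ(x) is a sum of at most two roots of unity for every nonidentity x ∈ G. Suppose there exist primes p₀, p₁, p₂ dividing |G|, each ≥ 5, such that d ≡ 0 (mod p₀), d ≡ 1 or −1 (mod p₁), and d ≡ 2 or −2 (mod p₂). Then the induced subgraph of the prime graph of G on the odd primes dividing |G| is disconnected: the set of odd primes dividing |G| can be partitioned into two nonempty disjoint sets S and T such that no element of G has order p·q with p ∈ S and q ∈ T. -/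
/-- A generalized character of a finite group: the difference of the characters of two
finite-dimensional complex representations. -/
def IsGenChar (G : Type) [Group G] (χ : G → ℂ) : Prop :=
  ∃ V W : FDRep ℂ G, ∀ g : G, χ g = V.character g - W.character g

/-!
The partition is by divisibility of `d`: it suffices that `p ∣ d ↔ q ∣ d` whenever some `g` has
order `p * q` for distinct odd primes `p` and `q`, one of which, say `p`, is at least `5`.

Let `ζ` be a primitive root of unity of large order and write `χ (g ^ i) = A(ζ ^ i)` with
`A ∈ ℤ[X]`. By hypothesis `χ g = P(ζ)` and `χ (g ^ q) = Q(ζ)`, where each of `P` and `Q` is a sum of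
at most two powers of `X`. Since `F(x) ^ l ≡ F(x ^ l)` modulo a prime `l`, an equality `A(x) = F(y)`
persists as a congruence `A(x ^ l) ≡ F(y ^ l)` modulo `l`. A congruence modulo `m` between algebraic
integers is an equality if all conjugates of their difference have absolute value less than `m`; as
`2 + 2 < p`, this gives `χ (g ^ p) = P(ζ ^ p)`, and hence `d ≡ P(ζ ^ (p * q))` modulo `q`.

Modulo `q` also `Q(ζ) ≡ P(ζ ^ q)`. The map `ζ ↦ ζ ^ p` need not come from an automorphism, but a
congruence between sums of fewer than `p` powers of `ζ`, to a modulus prime to `p`, survives it: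
grouping the exponents modulo `p` reduces this to roots of unity of smaller order. Therefore
`Q(ζ ^ p) ≡ P(ζ ^ (p * q)) ≡ d` modulo `q`, while `d ≡ Q(ζ ^ p)` modulo `p` is clear. If one of the
two primes divides `d`, it divides `Q(ζ ^ p)`, whose conjugates have absolute value at most `2`; so
`Q(ζ ^ p) = 0` and the other prime divides `d` as well.
-/

open Polynomial NumberField

/-! ### Congruences between algebraic integers -/

theorem natCast_dvd_aeval_pow_sub_aeval {R : Type*} [CommRing R] {p : ℕ} (hp : p.Prime)
    (P : ℤ[X]) (x : R) : (p : R) ∣ aeval x P ^ p - aeval (x ^ p) P := by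
  have : Fact p.Prime := ⟨hp⟩
  have hmap : (P ^ p - expand ℤ p P).map (Int.castRingHom (ZMod p)) = 0 := by
    rw [Polynomial.map_sub, Polynomial.map_pow, map_expand, ZMod.expand_card, sub_self]
  obtain ⟨Q, hQ⟩ : C (p : ℤ) ∣ P ^ p - expand ℤ p P := by
    refine (C_dvd_iff_dvd_coeff _ _).2 fun i => (ZMod.intCast_zmod_eq_zero_iff_dvd _ p).1 ?_
    rw [← eq_intCast (Int.castRingHom (ZMod p)), ← coeff_map, hmap, coeff_zero]
  have h := congrArg (aeval x) hQ
  rw [map_sub, map_pow, expand_aeval, map_mul, aeval_C] at h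
  exact ⟨aeval x Q, by simpa using h⟩

theorem natCast_dvd_aeval_pow_sub_aeval_pow {R : Type*} [CommRing R] {p : ℕ} (hp : p.Prime)
    {P Q : ℤ[X]} {x y : R} (h : aeval x P = aeval y Q) :
    (p : R) ∣ aeval (x ^ p) P - aeval (y ^ p) Q := by
  simpa [h] using
    (natCast_dvd_aeval_pow_sub_aeval hp Q y).sub (natCast_dvd_aeval_pow_sub_aeval hp P x)

section NumberField

variable {K : Type*} [Field K] [NumberField K]

theorem eq_zero_of_natCast_dvd {m : ℕ} {x : 𝓞 K} (hdvd : (m : 𝓞 K) ∣ x)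
    (hx : ∀ φ : 𝓞 K →+* ℂ, ‖φ x‖ < m) : x = 0 := by
  obtain ⟨y, rfl⟩ := hdvd
  by_contra h0
  obtain ⟨σ, hσ⟩ := exists_conjugate_one_le_norm (right_ne_zero_of_mul h0)
  have hlt := hx (σ.comp (algebraMap (𝓞 K) K))
  rw [map_mul, map_natCast, norm_mul, Complex.norm_natCast] at hlt
  exact hlt.not_ge (le_mul_of_one_le_right (Nat.cast_nonneg m) hσ)

theorem natCast_dvd_intCast_iff {m : ℕ} (hm : 0 < m) {d : ℤ} :
    (m : 𝓞 K) ∣ (d : 𝓞 K) ↔ (m : ℤ) ∣ d := by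
  refine ⟨fun h => ?_, fun h => by simpa using map_dvd (Int.castRingHom (𝓞 K)) h⟩
  have hmod : (m : 𝓞 K) ∣ ((d % m : ℤ) : 𝓞 K) := by
    rw [Int.emod_def]
    push_cast
    exact dvd_sub h (dvd_mul_right _ _)
  have h0 : ((d % m : ℤ) : 𝓞 K) = 0 := eq_zero_of_natCast_dvd hmod fun φ => by
    rw [map_intCast, Complex.norm_intCast,
      abs_of_nonneg (by exact_mod_cast Int.emod_nonneg d (Int.natCast_pos.2 hm).ne')]
    exact_mod_cast Int.emod_lt_of_pos d (Int.natCast_pos.2 hm)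
  exact Int.dvd_of_emod_eq_zero (by exact_mod_cast h0)

theorem exists_ringEquiv_apply_eq [IsGalois ℚ K] {n : ℕ} {ζ ζ' : 𝓞 K} (hn : 0 < n)
    (hζ : IsPrimitiveRoot ζ n) (hζ' : IsPrimitiveRoot ζ' n) :
    ∃ σ : 𝓞 K ≃+* 𝓞 K, σ ζ = ζ' := by
  have h : IsPrimitiveRoot (ζ : K) n := hζ.map_of_injective RingOfIntegers.coe_injective
  have h' : IsPrimitiveRoot (ζ' : K) n := hζ'.map_of_injective RingOfIntegers.coe_injective
  have hroot : aeval (ζ' : K) (minpoly ℚ (ζ : K)) = 0 := by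
    rw [← cyclotomic_eq_minpoly_rat h hn, cyclotomic_eq_minpoly_rat h' hn, minpoly.aeval]
  obtain ⟨σ, hσ⟩ := minpoly.exists_algEquiv_of_root'
    ((h.isIntegral hn).tower_top (A := ℚ)).isAlgebraic hroot
  exact ⟨RingOfIntegers.mapRingEquiv σ, RingOfIntegers.ext hσ⟩

end NumberField

/-! ### Relations between few powers of a root of unity -/

theorem sum_pow_mul_sum_eq {R ι : Type*} [CommRing R] [IsDomain R] {n : ℕ}
    {θ : R} (hθ : IsPrimitiveRoot θ n) (s : Finset ι) (f : ι → R) (k : ι → ℕ) (c : ℕ) :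
    ∑ t ∈ Finset.range n, θ ^ (t * c) * ∑ i ∈ s, f i * θ ^ (t * k i) =
      n * ∑ i ∈ s with n ∣ k i + c, f i := by
  have horth (j : ℕ) : ∑ t ∈ Finset.range n, (θ ^ j) ^ t = if n ∣ j then (n : R) else 0 := by
    split_ifs with hj
    · simp [(hθ.pow_eq_one_iff_dvd j).2 hj]
    · refine eq_zero_of_ne_zero_of_mul_left_eq_zero
        (sub_ne_zero.2 fun h => hj ((hθ.pow_eq_one_iff_dvd j).1 h)) ?_
      rw [mul_geom_sum, ← pow_mul, mul_comm, pow_mul, hθ.pow_eq_one, one_pow, sub_self]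
  calc _ = ∑ i ∈ s, f i * ∑ t ∈ Finset.range n, (θ ^ (k i + c)) ^ t := by
        simp_rw [Finset.mul_sum]
        rw [Finset.sum_comm]
        refine Finset.sum_congr rfl fun i _ => Finset.sum_congr rfl fun t _ => ?_
        ring
    _ = _ := by
        simp only [horth, Finset.mul_sum, Finset.sum_filter, mul_ite, mul_zero, mul_comm]

theorem sum_range_sum_filter_dvd_add {R ι : Type*} [AddCommMonoid R] {p : ℕ} (hp : 0 < p)
    (s : Finset ι) (f : ι → R) (k : ι → ℕ) :
    ∑ c ∈ Finset.range p, ∑ i ∈ s with p ∣ k i + c, f i = ∑ i ∈ s, f i := by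
  have : NeZero p := ⟨hp.ne'⟩
  rw [← Finset.sum_fiberwise_of_maps_to (g := fun i => (-(k i : ZMod p)).val)
    (t := Finset.range p) fun i _ => Finset.mem_range.2 (ZMod.val_lt _)]
  refine Finset.sum_congr rfl fun c hc => ?_
  congr! 2 with i
  rw [← ZMod.natCast_eq_zero_iff, Nat.cast_add, ← neg_eq_iff_add_eq_zero,
    ← (ZMod.val_injective p).eq_iff, ZMod.val_cast_of_lt (Finset.mem_range.1 hc)]

theorem exists_forall_not_dvd_add {ι : Type*} {s : Finset ι} {p : ℕ} (hs : s.card < p)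
    (k : ι → ℕ) : ∃ c, ∀ i ∈ s, ¬ p ∣ k i + c := by
  have : NeZero p := ⟨by omega⟩
  obtain ⟨c, hc⟩ : ∃ c : ZMod p, c ∉ s.image fun i => -(k i : ZMod p) := by
    by_contra! h
    have := Finset.card_le_card (fun c _ => h c : (Finset.univ : Finset (ZMod p)) ⊆ _)
    rw [Finset.card_univ, ZMod.card] at this
    exact absurd (this.trans Finset.card_image_le) (not_le.2 hs)
  refine ⟨c.val, fun i hi hdvd => hc (Finset.mem_image.2 ⟨i, hi, ?_⟩)⟩
  rw [← ZMod.natCast_eq_zero_iff, Nat.cast_add, ZMod.natCast_zmod_val] at hdvd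
  exact neg_eq_of_add_eq_zero_right hdvd

theorem eq_of_dvd_one_add_mul {p M t u : ℕ} (ht : t < p) (hu : u < p)
    (hpt : p ∣ 1 + M * t) (hpu : p ∣ 1 + M * u) : t = u := by
  have hcop : p.Coprime M :=
    ((Nat.coprime_add_mul_left_right M 1 t).2 M.coprime_one_right |>.coprime_dvd_right hpt).symm
  have hmod : 1 + M * t ≡ 1 + M * u [MOD p] :=
    ((Nat.modEq_zero_iff_dvd).2 hpt).trans ((Nat.modEq_zero_iff_dvd).2 hpu).symm
  exact (hmod.add_left_cancel' 1).cancel_left_of_coprime hcop |>.eq_of_lt_of_lt ht hu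

section FewTerms

variable {K ι : Type*} [Field K] [NumberField K] [IsGalois ℚ K] {p m M n : ℕ} {ζ : 𝓞 K}

theorem dvd_sum_pow_of_isPrimitiveRoot {ζ' : 𝓞 K} (hn : 0 < n) (hζ : IsPrimitiveRoot ζ n)
    (hζ' : IsPrimitiveRoot ζ' n) {s : Finset ι} {a : ι → ℤ} {k : ι → ℕ}
    (h : (m : 𝓞 K) ∣ ∑ i ∈ s, a i * ζ ^ k i) : (m : 𝓞 K) ∣ ∑ i ∈ s, a i * ζ' ^ k i := by
  obtain ⟨σ, rfl⟩ := exists_ringEquiv_apply_eq hn hζ hζ'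
  simpa using map_dvd σ h

/-- At most one of the powers `ζ ^ (1 + M * t)` with `t < p` fails to be conjugate to `ζ`. The twist
by that one is recovered from the others because some class of exponents modulo `p` is empty. -/
theorem dvd_sum_mul_pow_of_card_lt (hp : p.Prime) (hpM : 0 < p * M)
    (hζ : IsPrimitiveRoot ζ (p * M)) {s : Finset ι} (hs : s.card < p) {a : ι → ℤ} {k : ι → ℕ}
    (h : (m : 𝓞 K) ∣ ∑ i ∈ s, a i * ζ ^ k i) {t : ℕ} (ht : t < p) :
    (m : 𝓞 K) ∣ ∑ i ∈ s, a i * ζ ^ k i * (ζ ^ M) ^ (t * k i) := by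
  have hgood {u : ℕ} (hu : ¬ p ∣ 1 + M * u) :
      (m : 𝓞 K) ∣ ∑ i ∈ s, a i * ζ ^ k i * (ζ ^ M) ^ (u * k i) := by
    have hcop : (1 + M * u).Coprime (p * M) :=
      Nat.Coprime.mul_right (hp.coprime_iff_not_dvd.2 hu).symm (by simp)
    convert dvd_sum_pow_of_isPrimitiveRoot hpM hζ (hζ.pow_of_coprime _ hcop) h using 2
    ring
  by_cases hpt : p ∣ 1 + M * t
  swap
  · exact hgood hpt
  obtain ⟨c, hc⟩ := exists_forall_not_dvd_add hs k
  have hsum := sum_pow_mul_sum_eq (hζ.pow hpM (mul_comm p M)) s (fun i => a i * ζ ^ k i) k c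
  rw [Finset.filter_false_of_mem hc, Finset.sum_empty, mul_zero,
    ← Finset.add_sum_erase _ _ (Finset.mem_range.2 ht)] at hsum
  have hunit : IsUnit ((ζ ^ M) ^ (t * c)) := ((hζ.isUnit hpM.ne').pow _).pow _
  rw [← hunit.dvd_mul_left, eq_neg_of_add_eq_zero_left hsum, dvd_neg]
  refine Finset.dvd_sum fun u hu => Dvd.dvd.mul_left (hgood fun hpu => ?_) _
  obtain ⟨hne, hu⟩ := Finset.mem_erase.1 hu
  exact hne (eq_of_dvd_one_add_mul (Finset.mem_range.1 hu) ht hpu hpt)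

theorem dvd_sum_filter_pow (hp : p.Prime) (hmp : m.Coprime p) (hpM : 0 < p * M)
    (hζ : IsPrimitiveRoot ζ (p * M)) {s : Finset ι} (hs : s.card < p) {a : ι → ℤ} {k : ι → ℕ}
    (h : (m : 𝓞 K) ∣ ∑ i ∈ s, a i * ζ ^ k i) (c : ℕ) :
    (m : 𝓞 K) ∣ ∑ i ∈ s with p ∣ k i + c, a i * ζ ^ k i := by
  have hcop : IsCoprime (m : 𝓞 K) (p : 𝓞 K) := by
    simpa using (Nat.isCoprime_iff_coprime.2 hmp).map (Int.castRingHom (𝓞 K))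
  refine hcop.dvd_of_dvd_mul_left ?_
  rw [← sum_pow_mul_sum_eq (hζ.pow hpM (mul_comm p M))]
  exact Finset.dvd_sum fun t ht =>
    (dvd_sum_mul_pow_of_card_lt hp hpM hζ hs h (Finset.mem_range.1 ht)).mul_left _

theorem dvd_sum_pow_pow (hp : p.Prime) (hmp : m.Coprime p) (hn : 0 < n)
    (hζ : IsPrimitiveRoot ζ n) {s : Finset ι} (hs : s.card < p) {a : ι → ℤ} {k : ι → ℕ}
    (h : (m : 𝓞 K) ∣ ∑ i ∈ s, a i * ζ ^ k i) :
    (m : 𝓞 K) ∣ ∑ i ∈ s, a i * (ζ ^ p) ^ k i := by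
  induction n using Nat.strong_induction_on generalizing ζ s k with
  | _ n ih =>
  by_cases hpn : p ∣ n
  swap
  · exact dvd_sum_pow_of_isPrimitiveRoot hn hζ (hζ.pow_of_prime hp hpn) h
  obtain ⟨M, rfl⟩ := hpn
  have hM : 0 < M := Nat.pos_of_mul_pos_left hn
  have hunit : IsUnit ζ := hζ.isUnit hn.ne'
  rw [← sum_range_sum_filter_dvd_add hp.pos s _ k]
  refine Finset.dvd_sum fun c _ => ?_
  rw [← ((hunit.pow p).pow c).dvd_mul_right, Finset.sum_mul]
  have hdiv : ∀ i ∈ s.filter (p ∣ k · + c), p * ((k i + c) / p) = k i + c := fun i hi =>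
    Nat.mul_div_cancel' (Finset.mem_filter.1 hi).2
  have hclass : (m : 𝓞 K) ∣ ∑ i ∈ s with p ∣ k i + c, a i * (ζ ^ p) ^ ((k i + c) / p) := by
    convert (dvd_sum_filter_pow hp hmp hn hζ hs h c).mul_right (ζ ^ c) using 1
    rw [Finset.sum_mul]
    refine Finset.sum_congr rfl fun i hi => ?_
    rw [← pow_mul, hdiv i hi]
    ring
  convert ih M (lt_mul_of_one_lt_left hM hp.one_lt) hM (hζ.pow hn rfl)
    ((Finset.card_filter_le _ _).trans_lt hs) hclass using 1
  refine Finset.sum_congr rfl fun i hi => ?_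
  rw [← pow_mul (ζ ^ p), hdiv i hi]
  ring

theorem dvd_aeval_pow (hp : p.Prime) (hmp : m.Coprime p) (hn : 0 < n)
    (hζ : IsPrimitiveRoot ζ n) {P : ℤ[X]} (hP : P.support.card < p)
    (h : (m : 𝓞 K) ∣ aeval ζ P) : (m : 𝓞 K) ∣ aeval (ζ ^ p) P := by
  simp only [aeval_def, eval₂_eq_sum, Polynomial.sum, eq_intCast, algebraMap_int_eq] at h ⊢
  exact dvd_sum_pow_pow hp hmp hn hζ hP h

end FewTerms

/-! ### Values that are sums of at most two roots of unity -/

/-- The integer polynomials whose value at a primitive root of unity of suitable order can be any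
sum of at most two roots of unity. -/
def IsSumAtMostTwoMonomials (P : ℤ[X]) : Prop :=
  P = 0 ∨ (∃ i, P = X ^ i) ∨ ∃ i j, P = X ^ i + X ^ j

namespace IsSumAtMostTwoMonomials

variable {P Q : ℤ[X]}

theorem card_support_le_two (hP : IsSumAtMostTwoMonomials P) : P.support.card ≤ 2 := by
  have hX (i : ℕ) : (X ^ i : ℤ[X]).support.card ≤ 1 := by simp [support_X_pow]
  rcases hP with rfl | ⟨i, rfl⟩ | ⟨i, j, rfl⟩
  · simp
  · exact (hX i).trans one_le_two
  · exact (Finset.card_le_card support_add).trans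
      ((Finset.card_union_le _ _).trans (add_le_add (hX i) (hX j)))

theorem card_support_sub_le_four (hP : IsSumAtMostTwoMonomials P)
    (hQ : IsSumAtMostTwoMonomials Q) : (P - Q).support.card ≤ 4 := by
  rw [sub_eq_add_neg]
  refine (Finset.card_le_card support_add).trans ((Finset.card_union_le _ _).trans ?_)
  rw [support_neg]
  exact add_le_add hP.card_support_le_two hQ.card_support_le_two

theorem norm_aeval_le_two (hP : IsSumAtMostTwoMonomials P) {z : ℂ} (hz : ‖z‖ = 1) :
    ‖aeval z P‖ ≤ 2 := by
  have hX (i : ℕ) : ‖z ^ i‖ ≤ 1 := by simp [hz]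
  rcases hP with rfl | ⟨i, rfl⟩ | ⟨i, j, rfl⟩
  · simp
  · simpa using (hX i).trans one_le_two
  · simpa [one_add_one_eq_two] using norm_add_le_of_le (hX i) (hX j)

theorem expand (hP : IsSumAtMostTwoMonomials P) (p : ℕ) :
    IsSumAtMostTwoMonomials (Polynomial.expand ℤ p P) := by
  rcases hP with rfl | ⟨i, rfl⟩ | ⟨i, j, rfl⟩
  · exact .inl (map_zero _)
  · exact .inr (.inl ⟨p * i, by simp [pow_mul]⟩)
  · exact .inr (.inr ⟨p * i, p * j, by simp [pow_mul]⟩)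

end IsSumAtMostTwoMonomials

theorem map_aeval_int {R S : Type*} [CommRing R] [CommRing S] (φ : R →+* S) (P : ℤ[X]) (x : R) :
    φ (aeval x P) = aeval (φ x) P :=
  (aeval_algHom_apply φ.toIntAlgHom x P).symm

theorem IsSumAtMostTwoMonomials.norm_map_aeval_le_two {R : Type*} [CommRing R] {n : ℕ}
    (hn : 0 < n) {ζ : R} (hζ : ζ ^ n = 1) {P : ℤ[X]} (hP : IsSumAtMostTwoMonomials P)
    (φ : R →+* ℂ) : ‖φ (aeval ζ P)‖ ≤ 2 := by
  rw [map_aeval_int]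
  refine hP.norm_aeval_le_two (Complex.norm_eq_one_of_pow_eq_one (n := n) ?_ hn.ne')
  rw [← map_pow, hζ, map_one]

section Congruences

variable {K : Type*} [Field K] [NumberField K] {p q n : ℕ} {ζ : 𝓞 K} {A P Q S : ℤ[X]}

theorem aeval_pow_eq_aeval_pow (hn : 0 < n) (hζ : ζ ^ n = 1) (hp : p.Prime) (hp5 : 5 ≤ p)
    (hP : IsSumAtMostTwoMonomials P) (hAP : aeval ζ A = aeval ζ P)
    (hS : IsSumAtMostTwoMonomials S) (hAS : aeval (ζ ^ p) A = aeval ζ S) :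
    aeval (ζ ^ p) A = aeval (ζ ^ p) P := by
  rw [← sub_eq_zero]
  refine eq_zero_of_natCast_dvd (natCast_dvd_aeval_pow_sub_aeval_pow hp hAP) fun φ => ?_
  rw [hAS, ← expand_aeval, map_sub]
  calc ‖φ (aeval ζ S) - φ (aeval ζ (expand ℤ p P))‖
      ≤ 2 + 2 := norm_sub_le_of_le (hS.norm_map_aeval_le_two hn hζ φ)
        ((hP.expand p).norm_map_aeval_le_two hn hζ φ)
    _ < p := by norm_num; exact_mod_cast hp5

theorem natCast_dvd_aeval_pow_mul_sub_aeval_pow [IsGalois ℚ K] (hn : 0 < n)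
    (hζ : IsPrimitiveRoot ζ n) (hp : p.Prime) (hp5 : 5 ≤ p) (hq : q.Prime) (hpq : p ≠ q)
    (hP : IsSumAtMostTwoMonomials P) (hAP : aeval ζ A = aeval ζ P)
    (hQ : IsSumAtMostTwoMonomials Q) (hAQ : aeval (ζ ^ q) A = aeval ζ Q)
    (hS : IsSumAtMostTwoMonomials S) (hAS : aeval (ζ ^ p) A = aeval ζ S) :
    (q : 𝓞 K) ∣ aeval (ζ ^ (p * q)) A - aeval (ζ ^ p) Q := by
  have hAP_mul : (q : 𝓞 K) ∣ aeval (ζ ^ (p * q)) A - aeval (ζ ^ (p * q)) P := by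
    rw [pow_mul]
    exact natCast_dvd_aeval_pow_sub_aeval_pow hq
      (aeval_pow_eq_aeval_pow hn hζ.pow_eq_one hp hp5 hP hAP hS hAS)
  have hQP : (q : 𝓞 K) ∣ aeval ζ (Q - expand ℤ q P) := by
    rw [map_sub, expand_aeval, ← hAQ]
    exact natCast_dvd_aeval_pow_sub_aeval_pow hq hAP
  have hQP_pow : (q : 𝓞 K) ∣ aeval (ζ ^ p) Q - aeval (ζ ^ (p * q)) P := by
    rw [pow_mul, ← expand_aeval q P (ζ ^ p), ← map_sub]
    exact dvd_aeval_pow hp ((Nat.coprime_primes hq hp).2 hpq.symm) hn hζ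
      ((hQ.card_support_sub_le_four (hP.expand q)).trans_lt hp5) hQP
  simpa using hAP_mul.sub hQP_pow

theorem dvd_iff_dvd_of_aeval_eq [IsGalois ℚ K] (hn : 0 < n) (hζ : IsPrimitiveRoot ζ n)
    (hp : p.Prime) (hp5 : 5 ≤ p) (hq : q.Prime) (hq3 : 3 ≤ q) (hpq : p ≠ q)
    (hP : IsSumAtMostTwoMonomials P) (hAP : aeval ζ A = aeval ζ P)
    (hQ : IsSumAtMostTwoMonomials Q) (hAQ : aeval (ζ ^ q) A = aeval ζ Q)
    (hS : IsSumAtMostTwoMonomials S) (hAS : aeval (ζ ^ p) A = aeval ζ S) {d : ℤ}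
    (hd : aeval (ζ ^ (p * q)) A = d) : (p : ℤ) ∣ d ↔ (q : ℤ) ∣ d := by
  have hdp : (p : 𝓞 K) ∣ d - aeval (ζ ^ p) Q := by
    rw [← hd, mul_comm, pow_mul]
    exact natCast_dvd_aeval_pow_sub_aeval_pow hp hAQ
  have hdq : (q : 𝓞 K) ∣ d - aeval (ζ ^ p) Q :=
    hd ▸ natCast_dvd_aeval_pow_mul_sub_aeval_pow hn hζ hp hp5 hq hpq hP hAP hQ hAQ hS hAS
  have hzero {l : ℕ} (hl : 3 ≤ l) (h : (l : 𝓞 K) ∣ aeval (ζ ^ p) Q) : aeval (ζ ^ p) Q = 0 := by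
    refine eq_zero_of_natCast_dvd h fun φ => ?_
    rw [← expand_aeval]
    exact ((hQ.expand p).norm_map_aeval_le_two hn hζ.pow_eq_one φ).trans_lt (by exact_mod_cast hl)
  rw [← natCast_dvd_intCast_iff (K := K) hp.pos, ← natCast_dvd_intCast_iff (K := K) hq.pos]
  constructor <;> intro h
  · simpa [hzero (by omega) ((dvd_sub_right h).1 hdp)] using hdq
  · simpa [hzero hq3 ((dvd_sub_right h).1 hdq)] using hdp

end Congruences

theorem IsRootOfUnity.exists_pow_eq {z : ℂ} (hz : IsRootOfUnity z) :
    ∃ n, 0 < n ∧ ∀ {N : ℕ} {ζ : ℂ}, 0 < N → n ∣ N → IsPrimitiveRoot ζ N → ∃ i, ζ ^ i = z := by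
  obtain ⟨n, hn, hzn⟩ := hz
  refine ⟨n, hn, fun {N ζ} hN hnN hζ => ?_⟩
  have : NeZero N := ⟨hN.ne'⟩
  have hzN : z ^ N = 1 := orderOf_dvd_iff_pow_eq_one.1 ((orderOf_dvd_of_pow_eq_one hzn).trans hnN)
  obtain ⟨i, -, hi⟩ := hζ.eq_pow_of_pow_eq_one hzN
  exact ⟨i, hi⟩

theorem IsSumAtMostTwoRootsOfUnity.exists_aeval_eq {z : ℂ} (hz : IsSumAtMostTwoRootsOfUnity z) :
    ∃ n, 0 < n ∧ ∀ {N : ℕ} {ζ : ℂ}, 0 < N → n ∣ N → IsPrimitiveRoot ζ N →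
      ∃ P, IsSumAtMostTwoMonomials P ∧ z = aeval ζ P := by
  rcases hz with rfl | hz | ⟨u, v, hu, hv, rfl⟩
  · exact ⟨1, one_pos, fun _ _ _ => ⟨0, .inl rfl, by simp⟩⟩
  · obtain ⟨n, hn, h⟩ := hz.exists_pow_eq
    refine ⟨n, hn, fun hN hnN hζ => ?_⟩
    obtain ⟨i, rfl⟩ := h hN hnN hζ
    exact ⟨X ^ i, .inr (.inl ⟨i, rfl⟩), by simp⟩
  · obtain ⟨m, hm, hu⟩ := hu.exists_pow_eq
    obtain ⟨n, hn, hv⟩ := hv.exists_pow_eq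
    refine ⟨m * n, Nat.mul_pos hm hn, fun hN hmn hζ => ?_⟩
    obtain ⟨i, rfl⟩ := hu hN (dvd_of_mul_right_dvd hmn) hζ
    obtain ⟨j, rfl⟩ := hv hN (dvd_of_mul_left_dvd hmn) hζ
    exact ⟨X ^ i + X ^ j, .inr (.inr ⟨i, j, rfl⟩), by simp⟩

/-! ### Generalized characters on the powers of an element -/

theorem exists_basis_hasEigenvector {K V : Type*} [Field K] [IsAlgClosed K] [AddCommGroup V]
    [Module K V] [FiniteDimensional K V] {f : Module.End K V} (hf : f.IsSemisimple) :
    ∃ (b : Module.Basis (Fin (Module.finrank K V)) K V) (μ : Fin (Module.finrank K V) → K),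
      ∀ j, f.HasEigenvector (μ j) (b j) := by
  classical
  have hinternal : DirectSum.IsInternal f.eigenspace :=
    DirectSum.isInternal_submodule_of_iSupIndep_of_iSup_eq_top f.eigenspaces_iSupIndep
      hf.iSup_eigenspace_eq_top
  let b := hinternal.collectedBasis fun μ => Module.finBasis K (f.eigenspace μ)
  have := FiniteDimensional.fintypeBasisIndex b
  let e := Fintype.equivFinOfCardEq (Module.finrank_eq_card_basis b).symm
  refine ⟨b.reindex e, fun j => (e.symm j).1, fun j => ?_⟩
  rw [Module.Basis.reindex_apply]
  exact ⟨hinternal.collectedBasis_mem _ _, b.ne_zero _⟩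

theorem trace_pow_eq_sum_pow {R V ι : Type*} [CommRing R] [AddCommGroup V] [Module R V]
    [Fintype ι] {f : Module.End R V} {b : Module.Basis ι R V} {μ : ι → R}
    (hb : ∀ j, f.HasEigenvector (μ j) (b j)) (i : ℕ) :
    LinearMap.trace R V (f ^ i) = ∑ j, μ j ^ i := by
  classical
  rw [LinearMap.trace_eq_matrix_trace R b, Matrix.trace]
  refine Finset.sum_congr rfl fun j _ => ?_
  simp [LinearMap.toMatrix_apply, (hb j).pow_apply]

theorem exists_forall_trace_pow_eq_aeval {K V : Type*} [Field K] [IsAlgClosed K] [AddCommGroup V]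
    [Module K V] [FiniteDimensional K V] {n : ℕ} [NeZero (n : K)] {ζ : K}
    (hζ : IsPrimitiveRoot ζ n) {f : Module.End K V} (hf : f ^ n = 1) :
    ∃ A : ℤ[X], ∀ i : ℕ, LinearMap.trace K V (f ^ i) = aeval (ζ ^ i) A := by
  have hsemisimple : f.IsSemisimple :=
    Module.End.isSemisimple_of_squarefree_aeval_eq_zero (p := X ^ n - 1)
      ((X_pow_sub_one_separable_iff.2 (NeZero.ne (n : K))).squarefree) (by simp [hf])
  obtain ⟨b, μ, hb⟩ := exists_basis_hasEigenvector hsemisimple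
  have hpow (j) : ∃ r, ζ ^ r = μ j := by
    have : NeZero n := .of_neZero_natCast K
    have h := (hb j).pow_apply n
    rw [hf, Module.End.one_apply] at h
    have hμ : μ j ^ n = 1 := smul_left_injective K (hb j).2 (by simpa using h.symm)
    obtain ⟨r, -, hr⟩ := hζ.eq_pow_of_pow_eq_one hμ
    exact ⟨r, hr⟩
  choose r hr using hpow
  refine ⟨∑ j, X ^ r j, fun i => ?_⟩
  simp only [trace_pow_eq_sum_pow hb, map_sum, ← hr, map_pow, aeval_X, pow_right_comm _ i]

theorem IsGenChar.exists_forall_apply_pow_eq_aeval {G : Type} [Group G] {χ : G → ℂ}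
    (hχ : IsGenChar G χ) {g : G} {n : ℕ} [NeZero (n : ℂ)] (hg : g ^ n = 1) {ζ : ℂ}
    (hζ : IsPrimitiveRoot ζ n) : ∃ A : ℤ[X], ∀ i : ℕ, χ (g ^ i) = aeval (ζ ^ i) A := by
  obtain ⟨V, W, hVW⟩ := hχ
  have hchar (V : FDRep ℂ G) : ∃ A : ℤ[X], ∀ i : ℕ, V.character (g ^ i) = aeval (ζ ^ i) A := by
    obtain ⟨A, hA⟩ := exists_forall_trace_pow_eq_aeval hζ (f := V.ρ g) (by
      rw [← map_pow, hg, map_one])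
    exact ⟨A, fun i => by rw [← hA i, ← map_pow]; rfl⟩
  obtain ⟨A, hA⟩ := hchar V
  obtain ⟨B, hB⟩ := hchar W
  exact ⟨A - B, fun i => by rw [hVW, hA, hB, map_sub]⟩

theorem exists_isPrimitiveRoot_and_injective (n : ℕ) [NeZero n] :
    ∃ (ζ : 𝓞 (CyclotomicField n ℚ)) (φ : 𝓞 (CyclotomicField n ℚ) →+* ℂ),
      IsPrimitiveRoot ζ n ∧ Function.Injective φ := by
  have : IsCyclotomicExtension {n} ℚ (CyclotomicField n ℚ) :=
    CyclotomicField.isCyclotomicExtension n ℚ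
  have σ : CyclotomicField n ℚ →+* ℂ := Classical.arbitrary _
  exact ⟨_, σ.comp (algebraMap _ _),
    (IsCyclotomicExtension.zeta_spec n ℚ (CyclotomicField n ℚ)).toInteger_isPrimitiveRoot,
    σ.injective.comp RingOfIntegers.coe_injective⟩

theorem IsGenChar.dvd_iff_dvd_of_five_le {G : Type} [Group G] {χ : G → ℂ}
    (hχ : IsGenChar G χ) {d : ℤ} (hd : (d : ℂ) = χ 1)
    (hval : ∀ x : G, x ≠ 1 → IsSumAtMostTwoRootsOfUnity (χ x)) {p q : ℕ} (hp : p.Prime)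
    (hp5 : 5 ≤ p) (hq : q.Prime) (hq3 : 3 ≤ q) (hpq : p ≠ q) {g : G} (hg : orderOf g = p * q) :
    (p : ℤ) ∣ d ↔ (q : ℤ) ∣ d := by
  have hpow {i : ℕ} (hi : ¬ p * q ∣ i) : IsSumAtMostTwoRootsOfUnity (χ (g ^ i)) :=
    hval _ fun h => hi (hg ▸ orderOf_dvd_of_pow_eq_one h)
  have hnot {i : ℕ} (hi : 0 < i) (hlt : i < p * q) : ¬ p * q ∣ i := fun h =>
    (Nat.le_of_dvd hi h).not_gt hlt
  obtain ⟨a, ha, hχg⟩ := (hpow (hnot one_pos (by nlinarith))).exists_aeval_eq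
  obtain ⟨b, hb, hχgq⟩ := (hpow (hnot hq.pos (by nlinarith))).exists_aeval_eq
  obtain ⟨c, hc, hχgp⟩ := (hpow (hnot hp.pos (by nlinarith))).exists_aeval_eq
  obtain ⟨N, hN, hpqN, haN, hbN, hcN⟩ : ∃ N, 0 < N ∧ p * q ∣ N ∧ a ∣ N ∧ b ∣ N ∧ c ∣ N :=
    ⟨p * q * (a * b * c), by have := hp.pos; have := hq.pos; positivity, dvd_mul_right _ _,
      ⟨p * q * (b * c), by ring⟩, ⟨p * q * (a * c), by ring⟩, ⟨p * q * (a * b), by ring⟩⟩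
  have : NeZero N := ⟨hN.ne'⟩
  have : IsCyclotomicExtension {N} ℚ (CyclotomicField N ℚ) :=
    CyclotomicField.isCyclotomicExtension N ℚ
  have : IsGalois ℚ (CyclotomicField N ℚ) := IsCyclotomicExtension.isGalois {N} ℚ _
  obtain ⟨ζ, φ, hζ, hφ⟩ := exists_isPrimitiveRoot_and_injective N
  have hζφ : IsPrimitiveRoot (φ ζ) N := hζ.map_of_injective hφ
  have hgN : g ^ N = 1 := orderOf_dvd_iff_pow_eq_one.1 (hg ▸ hpqN)
  obtain ⟨A, hA⟩ := hχ.exists_forall_apply_pow_eq_aeval hgN hζφ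
  obtain ⟨P, hP, hAP⟩ := hχg hN haN hζφ
  obtain ⟨Q, hQ, hAQ⟩ := hχgq hN hbN hζφ
  obtain ⟨S, hS, hAS⟩ := hχgp hN hcN hζφ
  have hlift {i : ℕ} {T : ℤ[X]} (h : χ (g ^ i) = aeval (φ ζ) T) :
      aeval (ζ ^ i) A = aeval ζ T :=
    hφ (by rw [map_aeval_int, map_aeval_int, map_pow, ← hA, h])
  refine dvd_iff_dvd_of_aeval_eq hN hζ hp hp5 hq hq3 hpq hP (by simpa using hlift hAP)
    hQ (hlift hAQ) hS (hlift hAS) (hφ ?_)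
  rw [map_aeval_int, map_pow, ← hA, ← hg, pow_orderOf_eq_one, ← hd, map_intCast]

theorem IsGenChar.dvd_iff_dvd_of_orderOf_eq {G : Type} [Group G] {χ : G → ℂ}
    (hχ : IsGenChar G χ) {d : ℤ} (hd : (d : ℂ) = χ 1)
    (hval : ∀ x : G, x ≠ 1 → IsSumAtMostTwoRootsOfUnity (χ x)) {p q : ℕ} (hp : p.Prime)
    (hp2 : p ≠ 2) (hq : q.Prime) (hq2 : q ≠ 2) (hpq : p ≠ q) {g : G} (hg : orderOf g = p * q) :
    (p : ℤ) ∣ d ↔ (q : ℤ) ∣ d := by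
  have hp3 : 3 ≤ p := hp.two_le.lt_of_ne' hp2
  have hq3 : 3 ≤ q := hq.two_le.lt_of_ne' hq2
  rcases eq_or_ne p 3 with rfl | hp3'
  · have hq5 := hq.five_le_of_ne_two_of_ne_three hq2 hpq.symm
    exact (hχ.dvd_iff_dvd_of_five_le hd hval hq hq5 hp hp3 hpq.symm (mul_comm 3 q ▸ hg)).symm
  · have hp5 := hp.five_le_of_ne_two_of_ne_three hp2 hp3'
    exact hχ.dvd_iff_dvd_of_five_le hd hval hp hp5 hq hq3 hpq hg

theorem not_dvd_of_dvd_sub_one_or_dvd_add_one {R : Type*} [CommRing R] {p d : R}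
    (hp : ¬ IsUnit p) (hd : p ∣ d - 1 ∨ p ∣ d + 1) : ¬ p ∣ d := fun h =>
  hp <| isUnit_of_dvd_one <| hd.elim (dvd_sub_right h).1 (dvd_add_right h).1

theorem stmt_15_general (G : Type) [Group G] [Fintype G]
    (χ : G → ℂ) (hχ : IsGenChar G χ)
    (d : ℤ) (hd : (d : ℂ) = χ 1)
    (hval : ∀ x : G, x ≠ 1 → IsSumAtMostTwoRootsOfUnity (χ x))
    (p₀ p₁ : ℕ) (hp₀ : p₀.Prime) (hp₁ : p₁.Prime)
    (hp₀G : p₀ ∣ Fintype.card G) (hp₁G : p₁ ∣ Fintype.card G)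
    (hp₀2 : p₀ ≠ 2) (hp₁2 : p₁ ≠ 2) (hd0 : (p₀ : ℤ) ∣ d) (hd1 : ¬ (p₁ : ℤ) ∣ d) :
    ∃ S T : Set ℕ, S.Nonempty ∧ T.Nonempty ∧ Disjoint S T ∧
      S ∪ T = {p : ℕ | p.Prime ∧ p ∣ Fintype.card G ∧ p ≠ 2} ∧
      ∀ p ∈ S, ∀ q ∈ T, ¬ ∃ g : G, orderOf g = p * q := by
  let oddPrimes := {p : ℕ | p.Prime ∧ p ∣ Fintype.card G ∧ p ≠ 2}
  let divisors := {p : ℕ | (p : ℤ) ∣ d}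
  refine ⟨oddPrimes ∩ divisors, oddPrimes \ divisors, ⟨p₀, ⟨hp₀, hp₀G, hp₀2⟩, hd0⟩,
    ⟨p₁, ⟨hp₁, hp₁G, hp₁2⟩, hd1⟩, Set.disjoint_sdiff_inter.symm, Set.inter_union_sdiff _ _, ?_⟩
  rintro p ⟨⟨hp, -, hp2⟩, hpd⟩ q ⟨⟨hq, -, hq2⟩, hqd⟩ ⟨g, hg⟩
  have hpq : p ≠ q := fun h => hqd (h ▸ hpd)
  exact hqd ((hχ.dvd_iff_dvd_of_orderOf_eq hd hval hp hp2 hq hq2 hpq hg).1 hpd)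

theorem stmt_15 (G : Type) [Group G] [Fintype G]
    (χ : G → ℂ) (hχ : IsGenChar G χ)
    (d : ℤ) (hd : (d : ℂ) = χ 1)
    (hval : ∀ x : G, x ≠ 1 → IsSumAtMostTwoRootsOfUnity (χ x))
    (p₀ p₁ p₂ : ℕ) (hp₀ : p₀.Prime) (hp₁ : p₁.Prime) (hp₂ : p₂.Prime)
    (hp₀G : p₀ ∣ Fintype.card G) (hp₁G : p₁ ∣ Fintype.card G) (hp₂G : p₂ ∣ Fintype.card G)
    (hp₀5 : 5 ≤ p₀) (hp₁5 : 5 ≤ p₁) (hp₂5 : 5 ≤ p₂)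
    (hd0 : (p₀ : ℤ) ∣ d)
    (hd1 : (p₁ : ℤ) ∣ d - 1 ∨ (p₁ : ℤ) ∣ d + 1)
    (hd2 : (p₂ : ℤ) ∣ d - 2 ∨ (p₂ : ℤ) ∣ d + 2) :
    ∃ S T : Set ℕ, S.Nonempty ∧ T.Nonempty ∧ Disjoint S T ∧
      S ∪ T = {p : ℕ | p.Prime ∧ p ∣ Fintype.card G ∧ p ≠ 2} ∧
      ∀ p ∈ S, ∀ q ∈ T, ¬ ∃ g : G, orderOf g = p * q := by
  have hd1' := not_dvd_of_dvd_sub_one_or_dvd_add_one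
    (Nat.prime_iff_prime_int.1 hp₁).not_isUnit hd1
  exact stmt_15_general G χ hχ d hd hval p₀ p₁ hp₀ hp₁ hp₀G hp₁G (by omega) (by omega) hd0 hd1'
end

section
/- Let G = SL(2,3), the group of 2×2 matrices of determinant 1 over the field with 3 elements, and let P be a Sylow 3-subgroup of G. Consider the action of G by left multiplication on the set of left cosets G/P. Then for every nonidentity g ∈ G, the number of cosets in G/P fixed by g is either 0 or 2; in particular, no nonidentity element of G fixes exactly one coset. -/
/-!
Let `F` be a finite field of characteristic `p` and let `P` be a Sylow `p`-subgroup of `SL(2, F)`,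
acting on the plane `F²`. Being a `p`-group, `P` fixes a vector `v ≠ 0`. The stabilizer of `v` is
itself a `p`-group, because it consists of unipotent matrices, so it equals `P`. The orbit of `v` is
the set of all nonzero vectors, so `SL(2, F) ⧸ P` is isomorphic to it as a set with an action of
`SL(2, F)`, and the cosets fixed by `g` correspond to the nonzero vectors fixed by `g`. For `g ≠ 1`
the fixed vectors form a proper subspace of the plane, which has `1` or `|F|` elements.
-/

open Matrix MulAction

open scoped MatrixGroups

section GroupAction

variable {G : Type*} [Group G]

lemma natCard_fixed_quotient_stabilizer {X : Type*} [MulAction G X] (x : X) (g : G) :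
    Nat.card {c : G ⧸ stabilizer G x // g • c = c} = {y ∈ orbit G x | g • y = y}.ncard := by
  let e := orbitEquivQuotientStabilizer G x
  have e_symm_smul (c : G ⧸ stabilizer G x) : (e.symm (g • c) : X) = g • (e.symm c : X) :=
    ofQuotientStabilizer_smul G x g c
  have fixed_iff (c : G ⧸ stabilizer G x) : g • c = c ↔ g • (e.symm c : X) = e.symm c := by
    rw [← e_symm_smul, Subtype.coe_inj, e.symm.apply_eq_iff_eq]
  rw [← Nat.card_coe_set_eq]
  exact Nat.card_congr <| (e.symm.subtypeEquiv fixed_iff).trans <|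
    Equiv.subtypeSubtypeEquivSubtypeInter (· ∈ orbit G x) fun y ↦ g • y = y

lemma exists_ne_zero_le_stabilizer_of_isPGroup {p : ℕ} [Fact p.Prime] {V : Type*} [AddMonoid V]
    [Finite V] [DistribMulAction G V] {H : Subgroup G} (hH : IsPGroup p H)
    (hV : p ∣ Nat.card V) : ∃ v : V, v ≠ 0 ∧ H ≤ stabilizer G v := by
  have zero_fixed : (0 : V) ∈ fixedPoints H V := fun h ↦ smul_zero h
  obtain ⟨v, v_fixed, hv⟩ :=
    hH.exists_fixed_point_of_prime_dvd_card_of_fixed_point V hV zero_fixed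
  exact ⟨v, hv.symm, fun h hh ↦ v_fixed ⟨h, hh⟩⟩

end GroupAction

lemma natCard_eq_one_or_eq_of_finrank_eq_two {K V : Type*} [DivisionRing K] [AddCommGroup V]
    [Module K V] (hV : Module.finrank K V = 2) {W : Submodule K V} (hW : W ≠ ⊤) :
    Nat.card W = 1 ∨ Nat.card W = Nat.card K := by
  have : FiniteDimensional K V := Module.finite_of_finrank_eq_succ hV
  have finrank_lt : Module.finrank K W < 2 := hV ▸ Submodule.finrank_lt hW
  rw [Module.natCard_eq_pow_finrank (K := K)]
  interval_cases Module.finrank K W <;> simp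

lemma det_one_add_fin_two {R : Type*} [CommRing R] (B : Matrix (Fin 2) (Fin 2) R) :
    (1 + B).det = 1 + B.trace + B.det := by
  simp only [det_fin_two, trace_fin_two, Matrix.add_apply, one_apply_eq, one_apply_ne,
    ne_eq, zero_ne_one, one_ne_zero, not_false_eq_true]
  ring

lemma sub_one_sq_eq_zero_of_mulVec_eq_self {R : Type*} [CommRing R] [IsDomain R]
    {A : Matrix (Fin 2) (Fin 2) R} (hA : A.det = 1) {v : Fin 2 → R} (hv : v ≠ 0)
    (hAv : A *ᵥ v = v) : (A - 1) ^ 2 = 0 := by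
  have det_sub_one : (A - 1).det = 0 :=
    exists_mulVec_eq_zero_iff.mp ⟨v, hv, by simp [sub_mulVec, hAv]⟩
  have trace_sub_one : (A - 1).trace = 0 := by
    have det_expansion := det_one_add_fin_two (A - 1)
    rw [add_sub_cancel, hA, det_sub_one, add_zero] at det_expansion
    exact left_eq_add.mp det_expansion
  have cayley_hamilton := aeval_self_charpoly (A - 1)
  rw [charpoly_fin_two, det_sub_one, trace_sub_one] at cayley_hamilton
  simpa using cayley_hamilton

section SL2

variable {F : Type*} [Field F]

lemma mem_orbit_SL2_single {v : Fin 2 → F} (hv : v ≠ 0) :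
    v ∈ orbit SL(2, F) (Pi.single 0 1 : Fin 2 → F) := by
  have isCoprime : IsCoprime (v 0) (v 1) := by
    obtain ⟨i, hi⟩ := Function.ne_iff.mp hv
    fin_cases i
    · exact ⟨(v 0)⁻¹, 0, by simpa using inv_mul_cancel₀ hi⟩
    · exact ⟨0, (v 1)⁻¹, by simpa using inv_mul_cancel₀ hi⟩
  obtain ⟨g, h0, h1⟩ := isCoprime.exists_SL2_col 0
  exact ⟨g, (mulVec_single_one _ _).trans <| funext <| Fin.forall_fin_two.mpr ⟨h0, h1⟩⟩

lemma orbit_SL2_eq_compl_zero {v : Fin 2 → F} (hv : v ≠ 0) : orbit SL(2, F) v = {0}ᶜ := by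
  ext w
  constructor
  · rintro ⟨g, rfl⟩
    exact (smul_ne_zero_iff_ne g).mpr hv
  · intro hw
    rw [orbit_eq_iff.mpr (mem_orbit_SL2_single hv)]
    exact mem_orbit_SL2_single hw

lemma isPGroup_stabilizer_SL2 (p : ℕ) [Fact p.Prime] [CharP F p] {v : Fin 2 → F} (hv : v ≠ 0) :
    IsPGroup p (stabilizer SL(2, F) v) := by
  rintro ⟨g, hg⟩
  have sub_one_sq : ((g : Matrix (Fin 2) (Fin 2) F) - 1) ^ 2 = 0 :=
    sub_one_sq_eq_zero_of_mulVec_eq_self g.det_coe hv hg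
  have pow_eq_one : (g : Matrix (Fin 2) (Fin 2) F) ^ p = 1 := by
    have sub_one_pow := pow_eq_zero_of_le (Fact.out : p.Prime).two_le sub_one_sq
    rwa [sub_pow_expChar_of_commute p (Commute.one_right _), one_pow, sub_eq_zero] at sub_one_pow
  exact ⟨1, Subtype.ext <| Subtype.ext <| by simpa using pow_eq_one⟩

lemma ncard_nonzero_fixed_SL2 {g : SL(2, F)} (hg : g ≠ 1) :
    {v ∈ ({0}ᶜ : Set (Fin 2 → F)) | g • v = v}.ncard = 0 ∨
    {v ∈ ({0}ᶜ : Set (Fin 2 → F)) | g • v = v}.ncard = Nat.card F - 1 := by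
  let W := g.toLin'.toLinearMap.fixedSubmodule
  have W_ne_top : W ≠ ⊤ := by
    rw [ne_eq, LinearMap.fixedSubmodule_eq_top_iff]
    intro h
    refine hg <| SpecialLinearGroup.toLin'_injective <| LinearEquiv.toLinearMap_injective ?_
    simpa using h
  have eq_sdiff : {v ∈ ({0}ᶜ : Set (Fin 2 → F)) | g • v = v} = (W : Set (Fin 2 → F)) \ {0} := by
    ext v
    exact and_comm
  have ncard_eq : {v ∈ ({0}ᶜ : Set (Fin 2 → F)) | g • v = v}.ncard = Nat.card W - 1 := by
    rw [eq_sdiff, Set.ncard_sdiff_singleton_of_mem W.zero_mem, ← Nat.card_coe_set_eq]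
    rfl
  rw [ncard_eq]
  exact (natCard_eq_one_or_eq_of_finrank_eq_two (by simp) W_ne_top).imp (by simp [·]) (by rw [·])

end SL2

theorem stmt_19_general {F : Type*} [Field F] [Finite F] (p : ℕ) [Fact p.Prime] [CharP F p]
    (P : Sylow p SL(2, F)) {g : SL(2, F)} (hg : g ≠ 1) :
    Nat.card {x : SL(2, F) ⧸ (P : Subgroup _) // g • x = x} = 0 ∨
    Nat.card {x : SL(2, F) ⧸ (P : Subgroup _) // g • x = x} = Nat.card F - 1 := by
  have p_dvd_card : p ∣ Nat.card (Fin 2 → F) :=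
    CharP.eq (Fin 2 → F) (CharP.addOrderOf_one _) inferInstance ▸ addOrderOf_dvd_natCard 1
  obtain ⟨v, hv, P_le⟩ := exists_ne_zero_le_stabilizer_of_isPGroup P.isPGroup' p_dvd_card
  have stabilizer_eq : stabilizer SL(2, F) v = P :=
    P.is_maximal' (isPGroup_stabilizer_SL2 p hv) P_le
  rw [← stabilizer_eq, natCard_fixed_quotient_stabilizer, orbit_SL2_eq_compl_zero hv]
  exact ncard_nonzero_fixed_SL2 hg

theorem stmt_19 (P : Sylow 3 (Matrix.SpecialLinearGroup (Fin 2) (ZMod 3)))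
    (g : Matrix.SpecialLinearGroup (Fin 2) (ZMod 3)) (hg : g ≠ 1) :
    Nat.card {x : Matrix.SpecialLinearGroup (Fin 2) (ZMod 3) ⧸ (P : Subgroup _) // g • x = x} = 0 ∨
    Nat.card {x : Matrix.SpecialLinearGroup (Fin 2) (ZMod 3) ⧸ (P : Subgroup _) // g • x = x} = 2 := by
  simpa using stmt_19_general 3 P hg
end
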